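/- arXiv:2509.02495 — 9 statements merged into one kernel-verified Lean document; each statement's English description precedes it below -/
import Mathlib

section
/- Let Ω be a finite nonempty set, and let < and ≤ be two binary relations on the powerset of Ω with < nonempty. Then there exists a probability measure μ on Ω such that for all A, B ⊆ Ω, A < B implies μ(A) < μ(B) and A ≤ B implies μ(A) ≤ μ(B), if and only if the following condition (GS) holds: for every n ≥ 1 and all sequences (A_i)_{i≤n}, (B_i)_{i≤n} of subsets of Ω with (A_i)_{i≤n} ≤₀ (B_i)_{i≤n}, if for every i < n either B_i ≤ A_i or B_i < A_i, then it is not the case that B_n < A_n. -/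
open Finset

variable {Ω : Type*}

/-- The measure of a finite set of states given weights `w`: `μ(A) = ∑_{ω ∈ A} w ω`. -/
noncomputable def mea (w : Ω → ℝ) (A : Finset Ω) : ℝ := ∑ ω ∈ A, w ω

/-- `w` is a probability weight function: nonnegative and summing to 1. -/
def IsProbWeight [Fintype Ω] (w : Ω → ℝ) : Prop :=
  (∀ ω, 0 ≤ w ω) ∧ (∑ ω, w ω) = 1

/-- The measure is regular: only the empty set has measure 0. -/
def RegularW (w : Ω → ℝ) : Prop := ∀ X : Finset Ω, mea w X = 0 → X = ∅

/-- Conditional measure `μ_A(X) = μ(A ∩ X) / μ(A)`. -/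
noncomputable def condMea [DecidableEq Ω] (w : Ω → ℝ) (A X : Finset Ω) : ℝ := mea w (A ∩ X) / mea w A

/-- `X` is `(m,t)`-stable for a set function `m`: `X` is nonempty and for every `E` with
`X ∩ E ≠ ∅` and `m E > 0`, `m (X ∩ E) / m E > t`. -/
def StableFor [DecidableEq Ω] (m : Finset Ω → ℝ) (t : ℝ) (X : Finset Ω) : Prop :=
  X.Nonempty ∧ ∀ E : Finset Ω, (X ∩ E).Nonempty → 0 < m E → t < m (X ∩ E) / m E

/-- `S` is the `⊆`-least `(m,t)`-stable set. -/
def IsLeastStable [DecidableEq Ω] (m : Finset Ω → ℝ) (t : ℝ) (S : Finset Ω) : Prop :=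
  StableFor m t S ∧ ∀ X : Finset Ω, StableFor m t X → S ⊆ X

/-- `w` represents the selection function `σ` for threshold `t`. -/
def RepresentsAt [DecidableEq Ω] (w : Ω → ℝ) (t : ℝ) (σ : Finset Ω → Finset Ω) : Prop :=
  ∀ E : Finset Ω, (0 < mea w E → IsLeastStable (condMea w E) t (σ E)) ∧
    (mea w E = 0 → σ E = ∅)

/-- Selection axiom (S1): `σ(X) = ∅` only if `X = ∅`. -/
def SelA1 (σ : Finset Ω → Finset Ω) : Prop := ∀ X : Finset Ω, σ X = ∅ → X = ∅

/-- Selection axiom (S2): `σ(X) ⊆ X`. -/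
def SelA2 (σ : Finset Ω → Finset Ω) : Prop := ∀ X : Finset Ω, σ X ⊆ X

/-- Selection axiom (S3): if `σ(A) ∩ B ≠ ∅` then `σ(A ∩ B) ⊆ σ(A) ∩ B`. -/
def SelA3 [DecidableEq Ω] (σ : Finset Ω → Finset Ω) : Prop :=
  ∀ A B : Finset Ω, (σ A ∩ B).Nonempty → σ (A ∩ B) ⊆ σ A ∩ B

/-- Selection axiom (S4ₙ) for every `n`: if `σ(A ∪ Xᵢ) = Xᵢ` for all `i`, then
`σ(A ∪ ⋃ᵢ Xᵢ) ⊆ ⋃ᵢ Xᵢ`. -/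
def SelA4 [DecidableEq Ω] (σ : Finset Ω → Finset Ω) : Prop :=
  ∀ n : ℕ, ∀ A : Finset Ω, ∀ X : Fin (n + 1) → Finset Ω,
    (∀ i, σ (A ∪ X i) = X i) →
    σ (A ∪ univ.biUnion X) ⊆ univ.biUnion X

/-- `ω ≻_σ X` iff `ω ∉ X` and `σ (X ∪ {ω}) = {ω}`. -/
def succS [DecidableEq Ω] (σ : Finset Ω → Finset Ω) (ω : Ω) (X : Finset Ω) : Prop :=
  ω ∉ X ∧ σ (X ∪ {ω}) = {ω}

/-- `X ⪰_σ ω` iff `ω ∈ X` or `σ (X ∪ {ω}) ≠ {ω}`. -/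
def succeqS [DecidableEq Ω] (σ : Finset Ω → Finset Ω) (X : Finset Ω) (ω : Ω) : Prop :=
  ω ∈ X ∨ σ (X ∪ {ω}) ≠ {ω}

/-- `A ⪰*_σ B` iff either `A` is a singleton `{a}` with `a ≻_σ B`, or `B` is a singleton
`{b}` with `A ⪰_σ b`. -/
def geStar [DecidableEq Ω] (σ : Finset Ω → Finset Ω) (A B : Finset Ω) : Prop :=
  (∃ a, A = {a} ∧ succS σ a B) ∨ (∃ b, B = {b} ∧ succeqS σ A b)

/-- Two sequences of sets are balanced: every state occurs in exactly as many `A i`'s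
as `B i`'s. -/
def BalancedSeq {n : ℕ} (A B : Fin n → Finset Ω) : Prop :=
  ∀ ω : Ω, Nat.card {i // ω ∈ A i} = Nat.card {i // ω ∈ B i}

/-- `(A_i) ≤₀ (B_i)`: every state occurs in at most as many `A i`'s as `B i`'s. -/
def DomSeq {n : ℕ} (A B : Fin n → Finset Ω) : Prop :=
  ∀ ω : Ω, Nat.card {i // ω ∈ A i} ≤ Nat.card {i // ω ∈ B i}

/-- The (Scott) axiom for the induced order `⪰*_σ`. -/
def ScottAx [DecidableEq Ω] (σ : Finset Ω → Finset Ω) : Prop :=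
  ∀ n : ℕ, ∀ A B : Fin (n + 1) → Finset Ω, BalancedSeq A B →
    (∀ i, geStar σ (A i) (B i)) → ∀ i, geStar σ (B i) (A i)

/-- Farkas' lemma over `ℚ` for finitely many functionals. -/
theorem farkas_aux {W : Type*} [AddCommGroup W] [Module ℚ W] (m : ℕ) :
    ∀ (a : Fin m → (W →ₗ[ℚ] ℚ)) (b : W →ₗ[ℚ] ℚ),
    (∀ x, (∀ i, 0 ≤ a i x) → 0 ≤ b x) →
    ∃ c : Fin m → ℚ, (∀ i, 0 ≤ c i) ∧ b = ∑ i, c i • a i := by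
  induction m with
  | zero =>
    intro a b h
    refine ⟨fun _ => 0, fun _ => le_rfl, ?_⟩
    ext x
    have h1 := h x (fun i => i.elim0)
    have h2 := h (-x) (fun i => i.elim0)
    simp at h2 ⊢
    linarith
  | succ m ih =>
    intro a b h
    by_cases hb : ∀ x, (∀ i : Fin m, 0 ≤ a i.castSucc x) → 0 ≤ b x
    · obtain ⟨c, hc, hbc⟩ := ih (fun i => a i.castSucc) b hb
      refine ⟨Fin.snoc c 0, ?_, ?_⟩
      · intro i
        refine Fin.lastCases ?_ (fun i => ?_) i
        · simp
        · simpa using hc i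
      · rw [Fin.sum_univ_castSucc]
        simpa using hbc
    · push Not at hb
      obtain ⟨x1, hx1, hbx1⟩ := hb
      have ha1 : a (Fin.last m) x1 < 0 := by
        by_contra hcon
        push Not at hcon
        have := h x1 (fun i => Fin.lastCases hcon hx1 i)
        linarith
      obtain ⟨x0, hx0, hbx0, ha0⟩ : ∃ x0, (∀ i : Fin m, 0 ≤ a i.castSucc x0) ∧ b x0 < 0 ∧
          a (Fin.last m) x0 = -1 := by
        have hp : 0 < (-(a (Fin.last m) x1))⁻¹ := inv_pos.mpr (by linarith)
        refine ⟨(-(a (Fin.last m) x1))⁻¹ • x1, fun i => ?_, ?_, ?_⟩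
        · simp only [map_smul, smul_eq_mul]
          exact mul_nonneg hp.le (hx1 i)
        · simp only [map_smul, smul_eq_mul]
          exact mul_neg_of_pos_of_neg hp hbx1
        · simp only [map_smul, smul_eq_mul]
          have := ha1.ne
          field_simp
      obtain ⟨c, hc, hbc⟩ := ih
        (fun i => a i.castSucc + (a i.castSucc x0) • a (Fin.last m))
        (b + (b x0) • a (Fin.last m)) (by
          intro x hx
          have := h (x + (a (Fin.last m) x) • x0) (fun i => by
            refine Fin.lastCases ?_ (fun i => ?_) i
            · simp [ha0]
            · have := hx i
              simp at this ⊢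
              linarith)
          simp at this ⊢
          linarith)
      refine ⟨Fin.snoc c (∑ i, c i * a i.castSucc x0 - b x0), ?_, ?_⟩
      · intro i
        refine Fin.lastCases ?_ (fun i => ?_) i
        · have : 0 ≤ ∑ i, c i * a i.castSucc x0 :=
            Finset.sum_nonneg fun i _ => mul_nonneg (hc i) (hx0 i)
          simp
          linarith
        · simpa using hc i
      · rw [Fin.sum_univ_castSucc]
        simp only [Fin.snoc_castSucc, Fin.snoc_last]
        have h2 : b = ∑ i, c i • (a i.castSucc + (a i.castSucc x0) • a (Fin.last m))
            - (b x0) • a (Fin.last m) := by rw [← hbc]; simp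
        conv_lhs => rw [h2]
        simp only [smul_add, Finset.sum_add_distrib, smul_smul, ← Finset.sum_smul, sub_smul]
        abel

/-- Integral form of Farkas' lemma over `ℚ`. -/
theorem farkas_nat {W : Type*} [AddCommGroup W] [Module ℚ W] {ι : Type*} [Fintype ι]
    (a : ι → (W →ₗ[ℚ] ℚ)) (b : W →ₗ[ℚ] ℚ)
    (h : ∀ x, (∀ i, 0 ≤ a i x) → 0 ≤ b x) :
    ∃ N : ℕ, 0 < N ∧ ∃ k : ι → ℕ, N • b = ∑ i, k i • a i := by
  obtain ⟨c, hc, hbc⟩ := farkas_aux (Fintype.card ι) (fun i => a ((Fintype.equivFin ι).symm i)) b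
    (fun x hx => h x (fun i => by simpa using hx (Fintype.equivFin ι i)))
  let d : ι → ℚ := fun i => c (Fintype.equivFin ι i)
  have hd : ∀ i, 0 ≤ d i := fun i => hc _
  have hbd : b = ∑ i, d i • a i := by
    rw [hbc]
    refine Fintype.sum_equiv (Fintype.equivFin ι).symm _ _ (fun i => by simp [d])
  classical
  refine ⟨∏ i, (d i).den, Finset.prod_pos fun i _ => (d i).den_pos,
    fun i => (∏ j ∈ univ.erase i, (d j).den) * (d i).num.toNat, ?_⟩
  conv_lhs => rw [hbd]
  rw [Finset.smul_sum]
  refine Finset.sum_congr rfl fun i _ => ?_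
  rw [← Finset.mul_prod_erase univ (fun j => (d j).den) (Finset.mem_univ i)]
  simp only [← Nat.cast_smul_eq_nsmul ℚ, smul_smul]
  congr 1
  have h1 : (((d i).num.toNat : ℕ) : ℚ) = (d i).num := by
    have := Int.toNat_of_nonneg (Rat.num_nonneg.mpr (hd i))
    exact_mod_cast congrArg (Int.cast : ℤ → ℚ) this
  have h2 : ((d i).den : ℚ) * d i = (d i).num := Rat.den_mul_eq_num (d i)
  push_cast
  rw [h1, ← h2]
  ring

/-- The functional `w ↦ w(Y) - w(X)`. -/
noncomputable def diffFun (p : Finset Ω × Finset Ω) : (Ω → ℚ) →ₗ[ℚ] ℚ :=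
  ∑ ω ∈ p.2, LinearMap.proj ω - ∑ ω ∈ p.1, LinearMap.proj ω

theorem diffFun_apply (p : Finset Ω × Finset Ω) (w : Ω → ℚ) :
    diffFun p w = ∑ ω ∈ p.2, w ω - ∑ ω ∈ p.1, w ω := by
  simp [diffFun, LinearMap.sum_apply]

theorem diffFun_single [DecidableEq Ω] (p : Finset Ω × Finset Ω) (ω : Ω) :
    diffFun p (Pi.single ω 1) = (if ω ∈ p.2 then 1 else 0) - (if ω ∈ p.1 then 1 else 0) := by
  rw [diffFun_apply]
  simp [Pi.single_apply]

theorem exists_list {ι : Type*} (s : Finset ι) (f : ι → Finset Ω × Finset Ω) (k : ι → ℕ) :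
    ∃ l : List (Finset Ω × Finset Ω), (∀ p ∈ l, ∃ i, f i = p) ∧
      (l.map diffFun).sum = ∑ i ∈ s, k i • diffFun (f i) := by
  classical
  induction s using Finset.induction_on with
  | empty => exact ⟨[], by simp⟩
  | insert i s hi ih =>
    obtain ⟨l, hl, hs⟩ := ih
    refine ⟨List.replicate (k i) (f i) ++ l, ?_, ?_⟩
    · intro p hp
      rcases List.mem_append.mp hp with h | h
      · exact ⟨i, (List.eq_of_mem_replicate h).symm⟩
      · exact hl p h
    · rw [Finset.sum_insert hi, ← hs]
      simp

theorem natCard_mem [DecidableEq Ω] {n : ℕ} (A : Fin n → Finset Ω) (ω : Ω) :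
    Nat.card {i // ω ∈ A i} = ∑ i, if ω ∈ A i then 1 else 0 := by
  rw [Nat.card_eq_fintype_card, Fintype.card_subtype, Finset.card_filter]

theorem gs_of_rep [Fintype Ω] (lt le : Finset Ω → Finset Ω → Prop) (w : Ω → ℝ)
    (hw : ∀ ω, 0 ≤ w ω) (h1 : ∀ A B : Finset Ω, lt A B → mea w A < mea w B)
    (h2 : ∀ A B : Finset Ω, le A B → mea w A ≤ mea w B)
    (n : ℕ) (A B : Fin (n + 1) → Finset Ω) (hd : DomSeq A B)
    (h : ∀ i : Fin n, le (B i.castSucc) (A i.castSucc) ∨ lt (B i.castSucc) (A i.castSucc)) :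
    ¬ lt (B (Fin.last n)) (A (Fin.last n)) := by
  classical
  intro hl
  have key : ∀ C : Fin (n + 1) → Finset Ω,
      ∑ i, mea w (C i) = ∑ ω, w ω * (Nat.card {i // ω ∈ C i} : ℝ) := by
    intro C
    simp only [natCard_mem, mea]
    push_cast
    simp only [Finset.mul_sum]
    rw [Finset.sum_comm]
    refine Finset.sum_congr rfl fun i _ => ?_
    simp
  have hle : ∑ i, mea w (A i) ≤ ∑ i, mea w (B i) := by
    rw [key, key]
    exact Finset.sum_le_sum fun ω _ => mul_le_mul_of_nonneg_left (by exact_mod_cast hd ω) (hw ω)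
  have hlt : ∑ i, mea w (B i) < ∑ i, mea w (A i) := by
    rw [Fin.sum_univ_castSucc, Fin.sum_univ_castSucc]
    refine add_lt_add_of_le_of_lt (Finset.sum_le_sum fun i _ => ?_) (h1 _ _ hl)
    exact (h i).elim (h2 _ _) (fun h => (h1 _ _ h).le)
  linarith

theorem exists_weight [Fintype Ω] (lt le : Finset Ω → Finset Ω → Prop)
    (gs : ∀ n : ℕ, ∀ A B : Fin (n + 1) → Finset Ω, DomSeq A B →
        (∀ i : Fin n, le (B i.castSucc) (A i.castSucc) ∨ lt (B i.castSucc) (A i.castSucc)) →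
        ¬ lt (B (Fin.last n)) (A (Fin.last n)))
    (p : Finset Ω × Finset Ω) (hp : lt p.1 p.2) :
    ∃ w : Ω → ℚ, (∀ ω, 0 ≤ w ω) ∧
      (∀ q : Finset Ω × Finset Ω, le q.1 q.2 ∨ lt q.1 q.2 → 0 ≤ diffFun q w) ∧
      0 < diffFun p w := by
  classical
  by_contra hcon
  let Q := {q : Finset Ω × Finset Ω // le q.1 q.2 ∨ lt q.1 q.2}
  let a : Ω ⊕ Q → ((Ω → ℚ) →ₗ[ℚ] ℚ) := Sum.elim (fun ω => LinearMap.proj ω) (fun q => diffFun q.1)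
  obtain ⟨N, hN, k, hk⟩ := farkas_nat a (-diffFun p) (by
    intro x hx
    by_contra hneg
    refine hcon ⟨x, fun ω => hx (Sum.inl ω), fun q hq => hx (Sum.inr ⟨q, hq⟩), ?_⟩
    simp at hneg
    exact hneg)
  obtain ⟨l, hl, hls⟩ := exists_list (univ : Finset Q) (fun q => q.1) (fun q => k (Sum.inr q))
  rw [Fintype.sum_sum_type] at hk
  obtain ⟨M, rfl⟩ : ∃ M, N = M + 1 := ⟨N - 1, by omega⟩
  let L := List.replicate M p ++ l
  have hL : ∀ q ∈ L, le q.1 q.2 ∨ lt q.1 q.2 := by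
    intro q hq
    rcases List.mem_append.mp hq with h | h
    · rw [List.eq_of_mem_replicate h]; exact Or.inr hp
    · obtain ⟨i, rfl⟩ := hl q h
      exact i.2
  have hLs : (L.map diffFun).sum + diffFun p = - ∑ ω : Ω, k (Sum.inl ω) • LinearMap.proj ω := by
    have h3 : (L.map diffFun).sum = M • diffFun p + ∑ q : Q, k (Sum.inr q) • diffFun q.1 := by
      simp only [L, List.map_append, List.sum_append, hls, List.map_replicate, List.sum_replicate]
    rw [h3]
    simp only [a, Sum.elim_inl, Sum.elim_inr] at hk
    rw [smul_neg, add_smul, one_smul] at hk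
    rw [eq_neg_iff_add_eq_zero]
    have h4 := neg_eq_iff_add_eq_zero.mp hk
    rw [← h4]
    abel
  refine gs L.length (Fin.snoc (fun i => (L.get i).2) p.2) (Fin.snoc (fun i => (L.get i).1) p.1)
    ?_ ?_ ?_
  · intro ω
    have h5 := congrArg (fun φ : (Ω → ℚ) →ₗ[ℚ] ℚ => φ (Pi.single ω 1)) hLs
    have h6 : (L.map diffFun).sum = ∑ i : Fin L.length, diffFun (L.get i) := by
      rw [← Fin.sum_univ_getElem]
      refine Fintype.sum_equiv (finCongr (by simp)) _ _ (fun i => by simp)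
    rw [h6] at h5
    simp only [LinearMap.add_apply, LinearMap.sum_apply, diffFun_single, LinearMap.neg_apply,
      LinearMap.smul_apply, LinearMap.proj_apply] at h5
    have h7 : 0 ≤ ∑ x, k (Sum.inl x) • (Pi.single ω (1 : ℚ) : Ω → ℚ) x :=
      Finset.sum_nonneg fun x _ => nsmul_nonneg (by
        by_cases hx : x = ω
        · subst hx; simp
        · simp [hx]) _
    rw [natCard_mem, natCard_mem, Fin.sum_univ_castSucc, Fin.sum_univ_castSucc]
    simp only [Fin.snoc_castSucc, Fin.snoc_last]
    rw [Finset.sum_sub_distrib] at h5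
    have h8 : (∑ i, if ω ∈ (L.get i).2 then (1 : ℚ) else 0) + (if ω ∈ p.2 then 1 else 0) ≤
      (∑ i, if ω ∈ (L.get i).1 then (1 : ℚ) else 0) + (if ω ∈ p.1 then 1 else 0) := by linarith
    exact_mod_cast h8
  · intro i
    simp only [Fin.snoc_castSucc]
    exact hL _ (List.get_mem _ _)
  · simpa using hp

/-- Representation theorem for joint weak representability, Theorem `strongrep`:
with `<` nonempty, the pair `(<, ≤)` is jointly weakly representable by a probability measure
iff condition (GS) holds. -/
theorem stmt0 [Fintype Ω] [Nonempty Ω]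
    (lt le : Finset Ω → Finset Ω → Prop)
    (hlt : ∃ A B : Finset Ω, lt A B) :
    (∃ w : Ω → ℝ, IsProbWeight w ∧
        (∀ A B : Finset Ω, lt A B → mea w A < mea w B) ∧
        (∀ A B : Finset Ω, le A B → mea w A ≤ mea w B)) ↔
      (∀ n : ℕ, ∀ A B : Fin (n + 1) → Finset Ω, DomSeq A B →
        (∀ i : Fin n, le (B i.castSucc) (A i.castSucc) ∨ lt (B i.castSucc) (A i.castSucc)) →
        ¬ lt (B (Fin.last n)) (A (Fin.last n))) := by
  constructor
  · rintro ⟨w, ⟨hw, -⟩, h1, h2⟩ n A B hd h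
    exact gs_of_rep lt le w hw h1 h2 n A B hd h
  · intro gs
    classical
    let P := {p : Finset Ω × Finset Ω // lt p.1 p.2}
    choose w hw0 hw1 hw2 using fun p : P => exists_weight lt le gs p.1 p.2
    let v : Ω → ℚ := ∑ p, w p
    have hv0 : ∀ ω, 0 ≤ v ω := fun ω => by
      simp only [v, Finset.sum_apply]
      exact Finset.sum_nonneg fun p _ => hw0 p ω
    have hvle : ∀ A B, le A B → ∑ ω ∈ A, v ω ≤ ∑ ω ∈ B, v ω := fun A B h => by
      have : 0 ≤ diffFun (A, B) v := by
        simp only [v, map_sum]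
        exact Finset.sum_nonneg fun p _ => hw1 p (A, B) (Or.inl h)
      rw [diffFun_apply] at this
      linarith
    have hvlt : ∀ A B, lt A B → ∑ ω ∈ A, v ω < ∑ ω ∈ B, v ω := fun A B h => by
      have : 0 < diffFun (A, B) v := by
        simp only [v, map_sum]
        exact Finset.sum_pos' (fun p _ => hw1 p (A, B) (Or.inr h))
          ⟨⟨(A, B), h⟩, Finset.mem_univ _, hw2 ⟨(A, B), h⟩⟩
      rw [diffFun_apply] at this
      linarith
    have hpos : 0 < ∑ ω, v ω := by
      obtain ⟨A, B, h⟩ := hlt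
      calc 0 ≤ ∑ ω ∈ A, v ω := Finset.sum_nonneg fun ω _ => hv0 ω
        _ < ∑ ω ∈ B, v ω := hvlt A B h
        _ ≤ ∑ ω, v ω := Finset.sum_le_univ_sum_of_nonneg hv0
    have hm : ∀ A : Finset Ω, mea (fun ω => ((v ω / ∑ x, v x : ℚ) : ℝ)) A =
        (((∑ ω ∈ A, v ω) / ∑ x, v x : ℚ) : ℝ) := fun A => by
      rw [Finset.sum_div, mea, Rat.cast_sum]
    refine ⟨fun ω => ((v ω / ∑ x, v x : ℚ) : ℝ), ⟨fun ω => ?_, ?_⟩, fun A B h => ?_, fun A B h => ?_⟩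
    · exact Rat.cast_nonneg.mpr (div_nonneg (hv0 ω) hpos.le)
    · have := hm univ
      rw [mea, div_self hpos.ne'] at this
      simpa using this
    · rw [hm, hm, Rat.cast_lt]
      exact div_lt_div_of_pos_right (hvlt A B h) hpos
    · rw [hm, hm, Rat.cast_le]
      exact div_le_div_of_nonneg_right (hvle A B h) hpos.le
end

section
/- Let Ω be a finite nonempty set and ≤ a binary relation on the powerset of Ω. The following are equivalent: (1) ≤ satisfies (AR): for every n ≥ 1 and sequences (A_i)_{i≤n}, (B_i)_{i≤n} of subsets of Ω such that every ω ∈ Ω belongs to strictly more B_i's than A_i's, if B_i ≤ A_i for all i < n then it is not the case that B_n ≤ A_n; (2) for every n ≥ 1 and sequences (A_i)_{i≤n}, (B_i)_{i≤n} such that the sequence (Ω, A_1, …, A_n) is ≤₀-dominated by the sequence (∅, B_1, …, B_n), if B_i ≤ A_i for all i < n then it is not the case that B_n ≤ A_n; (3) there exists a nonempty binary relation < on the powerset of Ω such that the pair (<, ≤) satisfies (GS): for all sequences (A_i)_{i≤n} ≤₀ (B_i)_{i≤n}, if for every i < n either B_i ≤ A_i or B_i < A_i, then it is not the case that B_n <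 A_n. -/
open Finset

variable {Ω : Type*}

open Classical in
theorem cardSum {ι : Type*} [Fintype ι] (A : ι → Finset Ω) (ω : Ω) :
    Nat.card {i // ω ∈ A i} = ∑ i, if ω ∈ A i then 1 else 0 := by
  rw [Nat.card_eq_fintype_card, Fintype.card_subtype, Finset.card_filter]

theorem domCons [Fintype Ω] {n : ℕ} (A B : Fin n → Finset Ω) :
    DomSeq (Fin.cons (Finset.univ : Finset Ω) A : Fin (n+1) → Finset Ω)
      (Fin.cons (∅ : Finset Ω) B : Fin (n+1) → Finset Ω) ↔
    ∀ ω : Ω, Nat.card {i // ω ∈ A i} < Nat.card {i // ω ∈ B i} := by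
  classical
  unfold DomSeq
  refine forall_congr' fun ω => ?_
  rw [cardSum, cardSum, cardSum, cardSum, Fin.sum_univ_succ, Fin.sum_univ_succ]
  simp only [Fin.cons_zero, Fin.cons_succ, Finset.mem_univ, if_true, Finset.notMem_empty, if_false]
  omega

theorem arGen [Nonempty Ω] (le : Finset Ω → Finset Ω → Prop)
    (h : ∀ n : ℕ, ∀ A B : Fin (n + 1) → Finset Ω,
        (∀ ω : Ω, Nat.card {i // ω ∈ A i} < Nat.card {i // ω ∈ B i}) →
        (∀ i : Fin n, le (B i.castSucc) (A i.castSucc)) →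
        ¬ le (B (Fin.last n)) (A (Fin.last n)))
    {ι : Type*} [Fintype ι] (A B : ι → Finset Ω)
    (hc : ∀ ω : Ω, Nat.card {i // ω ∈ A i} < Nat.card {i // ω ∈ B i})
    (hle : ∀ i, le (B i) (A i)) : False := by
  classical
  obtain ⟨m, hm⟩ : ∃ m, Fintype.card ι = m := ⟨_, rfl⟩
  let e := Fintype.equivFinOfCardEq hm
  cases m with
  | zero =>
    obtain ⟨ω⟩ := ‹Nonempty Ω›
    have := hc ω
    have : IsEmpty ι := Fintype.card_eq_zero_iff.mp hm
    simp_all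
  | succ m =>
    refine h m (fun i => A (e.symm i)) (fun i => B (e.symm i)) (fun ω => ?_)
      (fun i => hle _) (hle _)
    have := hc ω
    rw [cardSum, cardSum] at this ⊢
    rwa [Equiv.sum_comp e.symm (fun i => if ω ∈ A i then 1 else 0),
      Equiv.sum_comp e.symm (fun i => if ω ∈ B i then 1 else 0)]

/-- equivalence of (1) the (AR) axiom, (2) its reformulation with the
sequences extended by `Ω` and `∅`, and (3) the existence of a nonempty strict relation `<`
such that the pair `(<, ≤)` satisfies (GS). -/
theorem stmt3 [Fintype Ω] [Nonempty Ω] (le : Finset Ω → Finset Ω → Prop) :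
    ((∀ n : ℕ, ∀ A B : Fin (n + 1) → Finset Ω,
        (∀ ω : Ω, Nat.card {i // ω ∈ A i} < Nat.card {i // ω ∈ B i}) →
        (∀ i : Fin n, le (B i.castSucc) (A i.castSucc)) →
        ¬ le (B (Fin.last n)) (A (Fin.last n))) ↔
      (∀ n : ℕ, ∀ A B : Fin (n + 1) → Finset Ω,
        DomSeq (Fin.cons (Finset.univ : Finset Ω) A) (Fin.cons (∅ : Finset Ω) B) →
        (∀ i : Fin n, le (B i.castSucc) (A i.castSucc)) →
        ¬ le (B (Fin.last n)) (A (Fin.last n)))) ∧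
    ((∀ n : ℕ, ∀ A B : Fin (n + 1) → Finset Ω,
        DomSeq (Fin.cons (Finset.univ : Finset Ω) A) (Fin.cons (∅ : Finset Ω) B) →
        (∀ i : Fin n, le (B i.castSucc) (A i.castSucc)) →
        ¬ le (B (Fin.last n)) (A (Fin.last n))) ↔
      (∃ lt : Finset Ω → Finset Ω → Prop, (∃ A B : Finset Ω, lt A B) ∧
        (∀ n : ℕ, ∀ A B : Fin (n + 1) → Finset Ω, DomSeq A B →
          (∀ i : Fin n, le (B i.castSucc) (A i.castSucc) ∨ lt (B i.castSucc) (A i.castSucc)) →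
          ¬ lt (B (Fin.last n)) (A (Fin.last n))))) := by
  classical
  have h12 : (∀ n : ℕ, ∀ A B : Fin (n + 1) → Finset Ω,
        (∀ ω : Ω, Nat.card {i // ω ∈ A i} < Nat.card {i // ω ∈ B i}) →
        (∀ i : Fin n, le (B i.castSucc) (A i.castSucc)) →
        ¬ le (B (Fin.last n)) (A (Fin.last n))) ↔
      (∀ n : ℕ, ∀ A B : Fin (n + 1) → Finset Ω,
        DomSeq (Fin.cons (Finset.univ : Finset Ω) A) (Fin.cons (∅ : Finset Ω) B) →
        (∀ i : Fin n, le (B i.castSucc) (A i.castSucc)) →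
        ¬ le (B (Fin.last n)) (A (Fin.last n))) :=
    forall_congr' fun n => forall_congr' fun A => forall_congr' fun B => by
      have := domCons A B
      constructor
      · exact fun h hd => h (this.mp hd)
      · exact fun h hd => h (this.mpr hd)
  refine ⟨h12, h12.symm.trans ⟨fun h => ?_, ?_⟩⟩
  · refine ⟨fun X Y => X = ∅ ∧ Y = Finset.univ, ⟨_, _, rfl, rfl⟩, ?_⟩
    rintro n A B hd hi ⟨hB, hA⟩
    let P : Fin n → Prop := fun i => le (B i.castSucc) (A i.castSucc)
    refine arGen le h (ι := {i : Fin n // P i}) (fun i => A i.val.castSucc)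
      (fun i => B i.val.castSucc) (fun ω => ?_) (fun i => i.2)
    have h1 := hd ω
    rw [cardSum, cardSum] at h1 ⊢
    rw [Fin.sum_univ_castSucc, Fin.sum_univ_castSucc, hA, hB,
      ← Fintype.sum_subtype_add_sum_subtype P (fun i => if ω ∈ A i.castSucc then 1 else 0),
      ← Fintype.sum_subtype_add_sum_subtype P (fun i => if ω ∈ B i.castSucc then 1 else 0)] at h1
    have h2 : ∑ i : {i : Fin n // ¬ P i}, (if ω ∈ B i.val.castSucc then 1 else 0) = 0 := by
      refine Finset.sum_eq_zero fun i _ => ?_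
      have := ((hi i.1).resolve_left i.2).1
      simp [this]
    simp only [Finset.mem_univ, if_true, Finset.notMem_empty, if_false] at h1
    omega
  · rintro ⟨lt, ⟨X, Y, hXY⟩, hGS⟩ n A B hd hi hl
    refine hGS (n + 1) (Fin.snoc A Y) (Fin.snoc B X) (fun ω => ?_) (fun i => Or.inl ?_) ?_
    · have h1 := hd ω
      rw [cardSum, cardSum] at h1 ⊢
      rw [Fin.sum_univ_castSucc, Fin.sum_univ_castSucc (n := n + 1)]
      simp only [Fin.snoc_castSucc, Fin.snoc_last]
      split_ifs <;> omega
    · simp only [Fin.snoc_castSucc]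
      induction i using Fin.lastCases with
      | last => exact hl
      | cast i => exact hi i
    · simpa only [Fin.snoc_last] using hXY
end

section
/- Let Ω be a finite nonempty set, μ a probability measure on Ω, t ∈ [1/2, 1), and A, B, C ⊆ Ω with μ(A∩B) > 0. Suppose S is the ⊆-least (μ_A, t)-stable set, S∩B ≠ ∅, and S ⊆ C. Then S∩B is (μ_{A∩B}, t)-stable, and consequently every ⊆-least (μ_{A∩B}, t)-stable set is a subset of S∩B, hence a subset of C (this is the Rational Monotonicity property of probabilistically stable revision). -/
open Finset

variable {Ω : Type*}

/-- Rational Monotonicity, Observation `RATMON`: if `S` is the `⊆`-least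
`(μ_A,t)`-stable set, `S ∩ B ≠ ∅` and `S ⊆ C`, then `S ∩ B` is `(μ_{A∩B},t)`-stable, and
every `⊆`-least `(μ_{A∩B},t)`-stable set is included in `S ∩ B`, hence in `C`. -/
theorem stmt5 [Fintype Ω] [DecidableEq Ω] [Nonempty Ω]
    (w : Ω → ℝ) (hw : IsProbWeight w)
    (t : ℝ) (ht0 : 1 / 2 ≤ t) (ht1 : t < 1)
    (A B C S : Finset Ω)
    (hAB : 0 < mea w (A ∩ B))
    (hS : IsLeastStable (condMea w A) t S)
    (hSB : (S ∩ B).Nonempty)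
    (hSC : S ⊆ C) :
    StableFor (condMea w (A ∩ B)) t (S ∩ B) ∧
      ∀ S' : Finset Ω, IsLeastStable (condMea w (A ∩ B)) t S' → S' ⊆ S ∩ B ∧ S' ⊆ C := by
  have hA : 0 < mea w A := by
    refine lt_of_lt_of_le hAB ?_
    exact Finset.sum_le_sum_of_subset_of_nonneg Finset.inter_subset_left
      (fun i _ _ => hw.1 i)
  have key : StableFor (condMea w (A ∩ B)) t (S ∩ B) := by
    refine ⟨hSB, fun E hE hpos => ?_⟩
    have e1 : A ∩ B ∩ E = A ∩ (B ∩ E) := Finset.inter_assoc _ _ _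
    have e2 : A ∩ B ∩ (S ∩ B ∩ E) = A ∩ (S ∩ (B ∩ E)) := by
      ext x
      simp only [Finset.mem_inter]
      tauto
    unfold condMea at hpos ⊢
    rw [e1] at hpos
    rw [e1, e2]
    have hp : 0 < mea w (A ∩ (B ∩ E)) := by
      have h := mul_pos hpos hAB
      rwa [div_mul_cancel₀ _ hAB.ne'] at h
    have h := hS.1.2 (B ∩ E) (by rwa [← Finset.inter_assoc]) (div_pos hp hA)
    unfold condMea at h
    rw [div_div_div_cancel_right₀ hA.ne'] at h
    rwa [div_div_div_cancel_right₀ hAB.ne']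
  refine ⟨key, fun S' hS' => ?_⟩
  have h := hS'.2 _ key
  exact ⟨h, h.trans (Finset.inter_subset_left.trans hSC)⟩
end

section
/- For every finite set Ω with |Ω| ≥ 3 and every t ∈ [1/2, 1), there exist a probability measure μ on Ω and sets A, B, C ⊆ Ω with μ(A) > 0, μ(B) > 0, μ(A∪B) > 0, together with sets S_A, S_B, S_{A∪B} ⊆ Ω such that S_A is the ⊆-least (μ_A, t)-stable set, S_B is the ⊆-least (μ_B, t)-stable set, S_{A∪B} is the ⊆-least (μ_{A∪B}, t)-stable set, S_A ⊆ C and S_B ⊆ C, but S_{A∪B} is not a subset of C (failure of the Or rule for probabilistically stable revision). -/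
open Finset

variable {Ω : Type*}

theorem mea_inter_eq [DecidableEq Ω] (w : Ω → ℝ) (D E : Finset Ω) :
    mea w (D ∩ E) = ∑ ω ∈ D, if ω ∈ E then w ω else 0 := by
  unfold mea
  rw [← Finset.filter_mem_eq_inter, Finset.sum_filter]

theorem stable_iff_aux [DecidableEq Ω] (w : Ω → ℝ) (D : Finset Ω) (hD : 0 < mea w D) (t : ℝ)
    (X : Finset Ω) : StableFor (condMea w D) t X ↔
      X.Nonempty ∧ ∀ E : Finset Ω, (X ∩ E).Nonempty → 0 < mea w (D ∩ E) →
        t * mea w (D ∩ E) < mea w (D ∩ (X ∩ E)) := by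
  unfold StableFor condMea
  refine and_congr_right fun _ => forall_congr' fun E => imp_congr_right fun _ => ?_
  rw [div_pos_iff_of_pos_right hD]
  refine imp_congr_right fun h => ?_
  rw [div_div_div_cancel_right₀ hD.ne', lt_div_iff₀ h]

/-- The least stable set for a pair whose first element is dominant. -/
theorem least_pair [DecidableEq Ω] (w : Ω → ℝ) (t : ℝ) (a b : Ω) (hab : a ≠ b)
    (ht0 : 1 / 2 ≤ t) (ht1 : t < 1) (ha : w a = t) (hb : w b = (1 - t) / 2) :
    0 < mea w {a, b} ∧ IsLeastStable (condMea w {a, b}) t {a} := by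
  have hpos : 0 < mea w {a, b} := by
    unfold mea
    rw [Finset.sum_pair hab, ha, hb]
    linarith
  refine ⟨hpos, ?_, ?_⟩
  · rw [stable_iff_aux w _ hpos]
    refine ⟨⟨a, by simp⟩, fun E hE _ => ?_⟩
    have haE : a ∈ E := by
      obtain ⟨x, hx⟩ := hE
      simp only [Finset.mem_inter, Finset.mem_singleton] at hx
      exact hx.1 ▸ hx.2
    rw [mea_inter_eq, mea_inter_eq, Finset.sum_pair hab, Finset.sum_pair hab]
    simp only [Finset.mem_inter, Finset.mem_singleton, haE, hab.symm, ha, hb]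
    by_cases hbE : b ∈ E <;> simp [hbE] <;> nlinarith
  · intro X hX
    rw [stable_iff_aux w _ hpos] at hX
    obtain ⟨⟨x, hx⟩, h⟩ := hX
    rw [Finset.singleton_subset_iff]
    by_contra haX
    have hxa : x ≠ a := fun h => haX (h ▸ hx)
    have := h {x, a} ⟨x, by simp [hx]⟩
    rw [mea_inter_eq, mea_inter_eq, Finset.sum_pair hab, Finset.sum_pair hab] at this
    simp only [Finset.mem_inter, Finset.mem_insert, Finset.mem_singleton, haX, hab.symm,
      ha, hb] at this
    by_cases hbx : b = x
    · subst hbx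
      simp [hx] at this
      have := this (by linarith)
      nlinarith
    · simp [hbx] at this
      have := this (by linarith)
      nlinarith

theorem least_triple [DecidableEq Ω] (w : Ω → ℝ) (t : ℝ) (a b c : Ω) (hab : a ≠ b)
    (hac : a ≠ c) (hbc : b ≠ c)
    (ht0 : 1 / 2 ≤ t) (ht1 : t < 1) (ha : w a = t) (hb : w b = (1 - t) / 2)
    (hc : w c = (1 - t) / 2) :
    0 < mea w {a, b, c} ∧ IsLeastStable (condMea w {a, b, c}) t {a, b, c} := by
  have hs : ∀ f : Ω → ℝ, ∑ ω ∈ ({a, b, c} : Finset Ω), f ω = f a + f b + f c := by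
    intro f
    rw [Finset.sum_insert (by simp [hab, hac]), Finset.sum_pair hbc, add_assoc]
  have hpos : 0 < mea w {a, b, c} := by
    unfold mea
    rw [hs, ha, hb, hc]
    linarith
  refine ⟨hpos, ?_, ?_⟩
  · rw [stable_iff_aux w _ hpos]
    refine ⟨⟨a, by simp⟩, fun E hE hp => ?_⟩
    rw [← Finset.inter_assoc, Finset.inter_self]
    nlinarith
  · intro X hX
    rw [stable_iff_aux w _ hpos] at hX
    obtain ⟨⟨x, hx⟩, h⟩ := hX
    have haX : a ∈ X := by
      by_contra haX
      have hxa : a ≠ x := fun h => haX (h ▸ hx)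
      have := h {x, a} ⟨x, by simp [hx]⟩
      rw [mea_inter_eq, mea_inter_eq, hs, hs] at this
      simp only [Finset.mem_inter, Finset.mem_insert, Finset.mem_singleton, haX, hab.symm,
        hac.symm, ha, hb, hc] at this
      by_cases hbx : b = x
      · subst hbx
        simp [hx, hbc.symm] at this
        have := this (by linarith)
        nlinarith
      · by_cases hcx : c = x
        · subst hcx
          simp [hx, hbc] at this
          have := this (by linarith)
          nlinarith
        · simp [hbx, hcx] at this
          have := this (by linarith)
          nlinarith
    have h1 := h {a, b, c} ⟨a, by simp [haX]⟩
    have h2 := fun hh => h {b, c} hh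
    rw [mea_inter_eq, mea_inter_eq, hs, hs] at h1 h2
    simp [haX, ha, hb, hc, hab, hac] at h1 h2
    have h1 := h1 (by linarith)
    by_cases hbX : b ∈ X <;> by_cases hcX : c ∈ X
    · simp [Finset.insert_subset_iff, haX, hbX, hcX]
    · have := h2 ⟨b, by simp [hbX]⟩ (by linarith)
      simp [hbX, hcX] at this
      nlinarith
    · have := h2 ⟨c, by simp [hcX]⟩ (by linarith)
      simp [hbX, hcX] at this
      nlinarith
    · simp [hbX, hcX, hab.symm, hac.symm] at h1
      nlinarith

/-- failure of the Or rule, Observation `failure of Or`: on every finite set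
with at least 3 elements and for every threshold `t ∈ [1/2, 1)`, there is a probability
measure and sets witnessing a failure of the Or rule for probabilistically stable revision. -/
theorem stmt6 (Ω : Type*) [Fintype Ω] [DecidableEq Ω] (hcard : 3 ≤ Fintype.card Ω)
    (t : ℝ) (ht0 : 1 / 2 ≤ t) (ht1 : t < 1) :
    ∃ (w : Ω → ℝ) (A B C SA SB SAB : Finset Ω),
      IsProbWeight w ∧
      0 < mea w A ∧ 0 < mea w B ∧ 0 < mea w (A ∪ B) ∧
      IsLeastStable (condMea w A) t SA ∧
      IsLeastStable (condMea w B) t SB ∧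
      IsLeastStable (condMea w (A ∪ B)) t SAB ∧
      SA ⊆ C ∧ SB ⊆ C ∧ ¬ SAB ⊆ C := by
  obtain ⟨a, b, c, hab, hac, hbc⟩ := Fintype.two_lt_card_iff.mp hcard
  let w : Ω → ℝ := fun ω =>
    (if ω = a then t else 0) + (if ω = b then (1 - t) / 2 else 0) +
      (if ω = c then (1 - t) / 2 else 0)
  have ha : w a = t := by simp [w, hab, hac]
  have hb : w b = (1 - t) / 2 := by simp [w, hab.symm, hbc]
  have hc : w c = (1 - t) / 2 := by simp [w, hac.symm, hbc.symm]
  have hU : ({a, b} ∪ {a, c} : Finset Ω) = {a, b, c} := by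
    ext x
    simp only [Finset.mem_union, Finset.mem_insert, Finset.mem_singleton]
    tauto
  obtain ⟨p1, s1⟩ := least_pair w t a b hab ht0 ht1 ha hb
  obtain ⟨p2, s2⟩ := least_pair w t a c hac ht0 ht1 ha hc
  obtain ⟨p3, s3⟩ := least_triple w t a b c hab hac hbc ht0 ht1 ha hb hc
  refine ⟨w, {a, b}, {a, c}, {a}, {a}, {a}, {a, b, c}, ⟨?_, ?_⟩, p1, p2, hU ▸ p3, s1, s2,
    hU ▸ s3, subset_rfl, subset_rfl, ?_⟩
  · intro ω
    have : (0 : ℝ) ≤ t := by linarith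
    have : (0 : ℝ) ≤ (1 - t) / 2 := by linarith
    simp only [w]
    split_ifs <;> linarith
  · simp only [w, Finset.sum_add_distrib, Finset.sum_ite_eq', Finset.mem_univ, if_true]
    ring
  · intro h
    have : b ∈ ({a} : Finset Ω) := h (by simp)
    exact hab.symm (by simpa using this)
end

section
/- Let Ω be a finite nonempty set, t ∈ [1/2, 1), and μ, ρ two probability measures on Ω. For a probability measure ν define the relation A ⊢_ν B (for A, B ⊆ Ω) to hold iff ν(A) = 0 or there exists S ⊆ B that is the ⊆-least (ν_A, t)-stable set. Then ⊢_μ and ⊢_ρ coincide (as relations on pairs of subsets of Ω) if and only if (a) μ and ρ have the same support, i.e. for every X ⊆ Ω, μ(X) = 0 iff ρ(X) = 0, and (b) for every ω ∈ Ω and X ⊆ Ω with ω ∉ X, μ({ω}) > (t/(1−t))·μ(X) iff ρ({ω}) > (t/(1−t))·ρ(X). -/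
open Finset

variable {Ω : Type*}

/-- The stability-based consequence relation: `A ⊢_ν B` iff `ν(A) = 0` or some `S ⊆ B` is the
`⊆`-least `(ν_A, t)`-stable set. -/
def Ent [DecidableEq Ω] (w : Ω → ℝ) (t : ℝ) (A B : Finset Ω) : Prop :=
  mea w A = 0 ∨ ∃ S : Finset Ω, S ⊆ B ∧ IsLeastStable (condMea w A) t S

theorem mea_nonneg8 {w : Ω → ℝ} (hw : ∀ ω, 0 ≤ w ω) (A : Finset Ω) : 0 ≤ mea w A :=
  Finset.sum_nonneg (fun i _ => hw i)

theorem mea_mono8 {w : Ω → ℝ} (hw : ∀ ω, 0 ≤ w ω) {A B : Finset Ω} (h : A ⊆ B) :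
    mea w A ≤ mea w B :=
  Finset.sum_le_sum_of_subset_of_nonneg h (fun i _ _ => hw i)

theorem mea_split8 [DecidableEq Ω] (w : Ω → ℝ) (A X : Finset Ω) :
    mea w A = mea w (A ∩ X) + mea w (A \ X) :=
  (Finset.sum_inter_add_sum_sdiff A X w).symm

theorem odds8 {t : ℝ} (ht1 : t < 1) (a b : ℝ) :
    t / (1 - t) * b < a ↔ t * (a + b) < a := by
  have h : 0 < 1 - t := by linarith
  rw [div_mul_eq_mul_div, div_lt_iff₀ h]
  constructor <;> intro h <;> nlinarith

theorem stab8 [DecidableEq Ω] {t : ℝ} (ht0 : 1 / 2 ≤ t) (ht1 : t < 1)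
    {w : Ω → ℝ} (hw : ∀ ω, 0 ≤ w ω) {A : Finset Ω} (hA : 0 < mea w A) (X : Finset Ω) :
    StableFor (condMea w A) t X ↔ X.Nonempty ∧ (mea w (A \ X) = 0 ∨
      ∀ ω ∈ X, ω ∈ A ∧ t / (1 - t) * mea w (A \ X) < mea w {ω}) := by
  have key : StableFor (condMea w A) t X ↔ X.Nonempty ∧ ∀ E : Finset Ω, (X ∩ E).Nonempty →
      0 < mea w (A ∩ E) → t * mea w (A ∩ E) < mea w (A ∩ (X ∩ E)) := by
    unfold StableFor condMea
    refine and_congr_right fun _ => forall_congr' fun E => imp_congr_right fun _ => ?_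
    rw [div_pos_iff_of_pos_right hA]
    refine imp_congr_right fun hE => ?_
    rw [div_div_div_cancel_right₀ hA.ne', lt_div_iff₀ hE]
  rw [key]
  refine and_congr_right fun _ => ⟨fun h => ?_, fun h E hE hpos => ?_⟩
  · by_cases h0 : mea w (A \ X) = 0
    · exact Or.inl h0
    right
    have hp : 0 < mea w (A \ X) := lt_of_le_of_ne (mea_nonneg8 hw _) (Ne.symm h0)
    intro ω hω
    have e1 : X ∩ ({ω} ∪ (A \ X)) = {ω} := by
      ext x; simp only [mem_inter, mem_union, mem_singleton, mem_sdiff]; grind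
    have hle : mea w (A \ X) ≤ mea w (A ∩ ({ω} ∪ (A \ X))) := by
      apply mea_mono8 hw
      intro x; simp only [mem_inter, mem_union, mem_singleton, mem_sdiff]; tauto
    have h2 := h ({ω} ∪ (A \ X)) (by rw [e1]; simp) (lt_of_lt_of_le hp hle)
    rw [e1] at h2
    by_cases hωA : ω ∈ A
    · refine ⟨hωA, ?_⟩
      have e2 : A ∩ {ω} = {ω} := by ext x; simp only [mem_inter, mem_singleton]; grind
      have e3 : (A ∩ ({ω} ∪ (A \ X))) ∩ {ω} = {ω} := by
        ext x; simp only [mem_inter, mem_union, mem_singleton, mem_sdiff]; grind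
      have e4 : (A ∩ ({ω} ∪ (A \ X))) \ {ω} = A \ X := by
        ext x; simp only [mem_inter, mem_union, mem_singleton, mem_sdiff]; grind
      rw [mea_split8 w _ {ω}, e3, e4, e2] at h2
      exact (odds8 ht1 _ _).2 h2
    · have e2 : A ∩ {ω} = ∅ := by ext x; simp only [mem_inter, mem_singleton]; grind
      rw [e2] at h2
      have : mea w (∅ : Finset Ω) = 0 := by simp [mea]
      nlinarith
  · have hs := mea_split8 w (A ∩ E) X
    have e1 : (A ∩ E) ∩ X = A ∩ (X ∩ E) := by ext x; simp only [mem_inter]; tauto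
    have hle : mea w ((A ∩ E) \ X) ≤ mea w (A \ X) := by
      apply mea_mono8 hw
      intro x; simp only [mem_inter, mem_sdiff]; tauto
    rw [e1] at hs
    rcases h with h | h
    · have := mea_nonneg8 hw ((A ∩ E) \ X)
      nlinarith
    · obtain ⟨ω, hω⟩ := hE
      rw [mem_inter] at hω
      obtain ⟨hA', h3⟩ := h ω hω.1
      have h4 : mea w {ω} ≤ mea w (A ∩ (X ∩ E)) := by
        apply mea_mono8 hw
        intro x; simp only [mem_inter, mem_singleton]; rintro rfl; tauto
      rw [hs]
      apply (odds8 ht1 _ _).1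
      have hc : 0 ≤ t / (1 - t) := div_nonneg (by linarith) (by linarith)
      have := mul_le_mul_of_nonneg_left hle hc
      linarith

theorem ent_empty8 [DecidableEq Ω] (t : ℝ) (w : Ω → ℝ) (A : Finset Ω) :
    Ent w t A ∅ ↔ mea w A = 0 := by
  unfold Ent
  constructor
  · rintro (h | ⟨S, hS, h, _⟩)
    · exact h
    · rw [subset_empty] at hS
      subst hS
      exact absurd h.1 (by simp)
  · exact Or.inl

theorem ent_single8 [DecidableEq Ω] {t : ℝ} (ht0 : 1 / 2 ≤ t) (ht1 : t < 1)
    {w : Ω → ℝ} (hw : ∀ ω, 0 ≤ w ω) {ω : Ω} {X : Finset Ω} (hω : ω ∉ X)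
    (hp : 0 < mea w {ω}) :
    Ent w t ({ω} ∪ X) {ω} ↔ t / (1 - t) * mea w X < mea w {ω} := by
  have hA : 0 < mea w ({ω} ∪ X) := lt_of_lt_of_le hp (mea_mono8 hw subset_union_left)
  have hc : 1 ≤ t / (1 - t) := by rw [le_div_iff₀ (by linarith)]; linarith
  have e1 : ({ω} ∪ X) \ {ω} = X := by
    ext x; simp only [mem_union, mem_singleton, mem_sdiff]; grind
  have hst : StableFor (condMea w ({ω} ∪ X)) t {ω} ↔ t / (1 - t) * mea w X < mea w {ω} := by
    rw [stab8 ht0 ht1 hw hA, e1]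
    constructor
    · rintro ⟨_, h | h⟩
      · rw [h]; simpa using hp
      · exact (h ω (by simp)).2
    · intro h
      refine ⟨by simp, Or.inr ?_⟩
      intro x hx
      rw [mem_singleton] at hx
      subst hx
      exact ⟨by simp, h⟩
  unfold Ent
  constructor
  · rintro (h | ⟨S, hS, h, _⟩)
    · exact absurd h hA.ne'
    · rcases subset_singleton_iff.1 hS with rfl | rfl
      · exact absurd h.1 (by simp)
      · exact hst.1 h
  · intro h
    refine Or.inr ⟨{ω}, Subset.refl _, hst.2 h, ?_⟩
    intro Y hY
    rw [stab8 ht0 ht1 hw hA] at hY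
    rw [singleton_subset_iff]
    by_contra hn
    have hle : mea w {ω} ≤ mea w (({ω} ∪ X) \ Y) := by
      apply mea_mono8 hw
      intro x; simp only [mem_union, mem_singleton, mem_sdiff]; rintro rfl; tauto
    obtain ⟨⟨y, hy⟩, h1 | h1⟩ := hY
    · linarith
    · obtain ⟨hyA, h2⟩ := h1 y hy
      have hyX : y ∈ X := by
        rw [mem_union, mem_singleton] at hyA
        rcases hyA with rfl | h
        · exact absurd hy hn
        · exact h
      have h3 : mea w {y} ≤ mea w X := mea_mono8 hw (singleton_subset_iff.2 hyX)
      have h4 := mea_nonneg8 hw X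
      nlinarith

theorem stab_mono8 [DecidableEq Ω] {t : ℝ} (ht0 : 1 / 2 ≤ t) (ht1 : t < 1)
    {μ ρ : Ω → ℝ} (hμ : ∀ ω, 0 ≤ μ ω) (hρ : ∀ ω, 0 ≤ ρ ω)
    (ha : ∀ X : Finset Ω, mea μ X = 0 ↔ mea ρ X = 0)
    (hb : ∀ (ω : Ω) (X : Finset Ω), ω ∉ X →
          (t / (1 - t) * mea μ X < mea μ {ω} ↔ t / (1 - t) * mea ρ X < mea ρ {ω}))
    {A : Finset Ω} (hA : mea μ A ≠ 0) (X : Finset Ω) :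
    StableFor (condMea μ A) t X ↔ StableFor (condMea ρ A) t X := by
  have h1 : 0 < mea μ A := lt_of_le_of_ne (mea_nonneg8 hμ _) (Ne.symm hA)
  have h2 : 0 < mea ρ A :=
    lt_of_le_of_ne (mea_nonneg8 hρ _) (Ne.symm (fun h => hA ((ha A).2 h)))
  rw [stab8 ht0 ht1 hμ h1, stab8 ht0 ht1 hρ h2]
  refine and_congr_right fun _ => or_congr (ha _) (forall_congr' fun ω => imp_congr_right
    fun hω => and_congr_right fun _ => hb ω _ ?_)
  simp [hω]

/-- Observation `GEOMETRY`: two probability measures generate the same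
stability-based consequence relation iff they have the same support and lie in the same
region of the fixed-odds hyperplane arrangement. -/
theorem stmt8 [Fintype Ω] [DecidableEq Ω] [Nonempty Ω]
    (t : ℝ) (ht0 : 1 / 2 ≤ t) (ht1 : t < 1)
    (μ ρ : Ω → ℝ) (hμ : IsProbWeight μ) (hρ : IsProbWeight ρ) :
    (∀ A B : Finset Ω, Ent μ t A B ↔ Ent ρ t A B) ↔
      ((∀ X : Finset Ω, mea μ X = 0 ↔ mea ρ X = 0) ∧
        (∀ (ω : Ω) (X : Finset Ω), ω ∉ X →
          (t / (1 - t) * mea μ X < mea μ {ω} ↔ t / (1 - t) * mea ρ X < mea ρ {ω}))) := by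
  constructor
  · intro h
    have ha : ∀ X : Finset Ω, mea μ X = 0 ↔ mea ρ X = 0 := fun X => by
      rw [← ent_empty8 t μ, ← ent_empty8 t ρ, h]
    refine ⟨ha, fun ω X hω => ?_⟩
    have hc : 0 ≤ t / (1 - t) := div_nonneg (by linarith) (by linarith)
    by_cases h0 : mea μ {ω} = 0
    · have h0' := (ha _).1 h0
      rw [h0, h0']
      have h1 := mul_nonneg hc (mea_nonneg8 hμ.1 X)
      have h2 := mul_nonneg hc (mea_nonneg8 hρ.1 X)
      constructor <;> intro <;> linarith
    · have h0' : mea ρ {ω} ≠ 0 := fun h => h0 ((ha _).2 h)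
      rw [← ent_single8 ht0 ht1 hμ.1 hω (lt_of_le_of_ne (mea_nonneg8 hμ.1 _) (Ne.symm h0)),
        ← ent_single8 ht0 ht1 hρ.1 hω (lt_of_le_of_ne (mea_nonneg8 hρ.1 _) (Ne.symm h0')), h]
  · rintro ⟨ha, hb⟩ A B
    unfold Ent
    by_cases hA : mea μ A = 0
    · simp [hA, (ha A).1 hA]
    · have hst := stab_mono8 ht0 ht1 hμ.1 hρ.1 ha hb hA
      unfold IsLeastStable
      simp only [hst, ha A]
end

section
/- Let Ω be a finite nonempty set and σ a selection function on Ω. If σ satisfies (S1), (S2), (S3), (S4ₙ) for every n ≥ 1, and the (Scott) axiom — whenever (A_i)_{i≤n} ≡₀ (B_i)_{i≤n} and A_i ⪰*_σ B_i for all i ≤ n, then A_i ⪯*_σ B_i for all i ≤ n — then there exists a regular probability measure μ on Ω that represents σ for threshold 1/2. Conversely, if μ is a regular probability measure on Ω and μ represents σ for threshold 1/2, then σ satisfies (S1), (S2), (S3), (S4ₙ) for every n ≥ 1, and the (Scott) axiom. -/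
open Finset

variable {Ω : Type*}

theorem mea_mono' {w : Ω → ℝ} (hw : ∀ ω, 0 < w ω) {A B : Finset Ω} (h : A ⊆ B) :
    mea w A ≤ mea w B :=
  Finset.sum_le_sum_of_subset_of_nonneg h (fun i _ _ => (hw i).le)

theorem mea_pos' {w : Ω → ℝ} (hw : ∀ ω, 0 < w ω) {A : Finset Ω} (h : A.Nonempty) :
    0 < mea w A := Finset.sum_pos (fun i _ => hw i) h

theorem mea_single' (w : Ω → ℝ) (x : Ω) : mea w {x} = w x := by simp [mea]

theorem mea_union' [DecidableEq Ω] (w : Ω → ℝ) {A B : Finset Ω} (h : Disjoint A B) :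
    mea w (A ∪ B) = mea w A + mea w B := Finset.sum_union h

theorem stable_iff' [DecidableEq Ω] {w : Ω → ℝ} (hw : ∀ ω, 0 < w ω) {E X : Finset Ω}
    (hE : E.Nonempty) :
    StableFor (condMea w E) (1 / 2) X ↔
      X.Nonempty ∧ (E ⊆ X ∨ (X ⊆ E ∧ ∀ x ∈ X, mea w (E \ X) < w x)) := by
  have hEp := mea_pos' hw hE
  have hdiv : ∀ a b : ℝ, (a / mea w E) / (b / mea w E) = a / b := fun a b =>
    div_div_div_cancel_right₀ hEp.ne' a b
  unfold StableFor condMea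
  simp only [hdiv]
  constructor
  · rintro ⟨hne, h⟩
    refine ⟨hne, ?_⟩
    by_cases hEX : E ⊆ X
    · exact Or.inl hEX
    right
    obtain ⟨y, hyE, hyX⟩ := Finset.not_subset.1 hEX
    have key : ∀ x ∈ X, x ∈ E ∧ mea w (E \ X) < w x := by
      intro x hx
      have h1 := h ((E \ X) ∪ {x}) ⟨x, by simp [hx]⟩
        (div_pos (mea_pos' hw ⟨y, by simp [hyE, hyX]⟩) hEp)
      have hXE : X ∩ ((E \ X) ∪ {x}) = {x} := by ext z; simp; grind
      rw [hXE] at h1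
      by_cases hxE : x ∈ E
      · refine ⟨hxE, ?_⟩
        have e1 : E ∩ {x} = {x} := by ext z; simp; grind
        have e2 : E ∩ ((E \ X) ∪ {x}) = (E \ X) ∪ {x} := by ext z; simp; grind
        rw [e1, e2, mea_union' w (by simp [hx]), mea_single'] at h1
        have hp : 0 < mea w (E \ X) := mea_pos' hw ⟨y, by simp [hyE, hyX]⟩
        have := hw x
        rw [lt_div_iff₀ (by linarith)] at h1
        linarith
      · have e1 : E ∩ {x} = ∅ := by ext z; simp; grind
        rw [e1] at h1
        simp [mea] at h1
        norm_num at h1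
    exact ⟨fun x hx => (key x hx).1, fun x hx => (key x hx).2⟩
  · rintro ⟨hne, h⟩
    refine ⟨hne, fun E' hE' hpos => ?_⟩
    have hpos' : 0 < mea w (E ∩ E') := by
      have := mul_pos hpos hEp
      rwa [div_mul_cancel₀ _ hEp.ne'] at this
    rw [lt_div_iff₀ hpos']
    rcases h with h | ⟨hs, h⟩
    · have : E ∩ (X ∩ E') = E ∩ E' := by ext z; simp; grind
      rw [this]; linarith
    · obtain ⟨x, hx⟩ := hE'
      simp only [Finset.mem_inter] at hx
      have h1 := h x hx.1
      have h2 : w x ≤ mea w (E ∩ (X ∩ E')) := by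
        rw [← mea_single' w x]
        apply mea_mono' hw
        intro z hz
        have := hs hx.1
        simp at hz ⊢
        subst hz
        exact ⟨this, hx⟩
      have h3 : mea w (E ∩ E') ≤ mea w ((E ∩ (X ∩ E')) ∪ (E \ X)) := by
        apply mea_mono' hw
        intro z; simp; grind
      rw [mea_union' w (by rw [Finset.disjoint_left]; intro z; simp; grind)] at h3
      linarith

theorem least_iff' [DecidableEq Ω] {w : Ω → ℝ} (hw : ∀ ω, 0 < w ω) {E S : Finset Ω}
    (hE : E.Nonempty) :
    IsLeastStable (condMea w E) (1 / 2) S ↔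
      S ⊆ E ∧ S.Nonempty ∧ (∀ x ∈ S, mea w (E \ S) < w x) ∧
        ∀ X, X ⊆ E → X.Nonempty → (∀ x ∈ X, mea w (E \ X) < w x) → S ⊆ X := by
  unfold IsLeastStable
  simp only [stable_iff' hw hE]
  constructor
  · rintro ⟨⟨hne, h⟩, hl⟩
    have hSE : S ⊆ E := hl E ⟨hE, Or.inl subset_rfl⟩
    refine ⟨hSE, hne, ?_, fun X h1 h2 h3 => hl X ⟨h2, Or.inr ⟨h1, h3⟩⟩⟩
    rcases h with h | h
    · intro x _
      have : E \ S = ∅ := Finset.sdiff_eq_empty_iff_subset.2 h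
      rw [this]; simpa [mea] using hw x
    · exact h.2
  · rintro ⟨h1, h2, h3, h4⟩
    refine ⟨⟨h2, Or.inr ⟨h1, h3⟩⟩, ?_⟩
    rintro X ⟨hX, h | h⟩
    · exact h1.trans h
    · exact h4 X h.1 hX h.2

/-- Farkas lemma over the rationals (Bartl's algebraic proof). -/
theorem farkas' {ι V : Type*} [AddCommGroup V] [Module ℚ V] (s : Finset ι) :
    ∀ (a : ι → V →ₗ[ℚ] ℚ) (b : V →ₗ[ℚ] ℚ),
      (∀ x, (∀ i ∈ s, 0 ≤ a i x) → 0 ≤ b x) →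
      ∃ c : ι → ℚ, (∀ i, 0 ≤ c i) ∧ b = ∑ i ∈ s, c i • a i := by
  classical
  induction s using Finset.induction_on with
  | empty =>
    intro a b h
    refine ⟨fun _ => 0, fun _ => le_rfl, ?_⟩
    ext x
    have h1 := h x (by simp)
    have h2 := h (-x) (by simp)
    simp at h2 ⊢
    linarith
  | insert m s hm ih =>
    intro a b h
    by_cases hb : ∀ x, (∀ i ∈ s, 0 ≤ a i x) → 0 ≤ b x
    · obtain ⟨c, hc, hbc⟩ := ih a b hb
      refine ⟨fun i => if i = m then 0 else c i, fun i => by dsimp; split_ifs; exacts [le_rfl, hc i], ?_⟩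
      rw [Finset.sum_insert hm, hbc]
      simp only [if_true, zero_smul, zero_add]
      refine Finset.sum_congr rfl fun i hi => ?_
      rw [if_neg (show i ≠ m by rintro rfl; exact hm hi)]
    · push Not at hb
      obtain ⟨x1, hx1, hbx1⟩ := hb
      have ham : a m x1 < 0 := by
        by_contra hcon
        push Not at hcon
        have := h x1 (by
          intro i hi
          rcases Finset.mem_insert.1 hi with rfl | hi
          · exact hcon
          · exact hx1 i hi)
        linarith
      obtain ⟨x0, hx0, hbx0, ham0⟩ : ∃ x0, (∀ i ∈ s, 0 ≤ a i x0) ∧ b x0 < 0 ∧ a m x0 = -1 := by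
        refine ⟨(-(a m x1))⁻¹ • x1, fun i hi => ?_, ?_, ?_⟩
        · have : 0 < (-(a m x1))⁻¹ := inv_pos.2 (by linarith)
          simp only [map_smul, smul_eq_mul]
          exact mul_nonneg this.le (hx1 i hi)
        · have : 0 < (-(a m x1))⁻¹ := inv_pos.2 (by linarith)
          simp only [map_smul, smul_eq_mul]
          exact mul_neg_of_pos_of_neg this hbx1
        · simp only [map_smul, smul_eq_mul]
          have : a m x1 ≠ 0 := ham.ne
          field_simp
      obtain ⟨c, hc, hbc⟩ := ih (fun i => a i + (a i x0) • a m) (b + (b x0) • a m) (by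
        intro x hx
        have := h (x + (a m x) • x0) (by
          intro i hi
          rcases Finset.mem_insert.1 hi with rfl | hi
          · simp [ham0]
          · have := hx i hi
            simp at this ⊢
            linarith)
        simp at this ⊢
        linarith)
      refine ⟨fun i => if i = m then (∑ j ∈ s, c j * a j x0) - b x0 else c i, ?_, ?_⟩
      · intro i
        dsimp
        split_ifs
        · have : 0 ≤ ∑ j ∈ s, c j * a j x0 :=
            Finset.sum_nonneg fun j hj => mul_nonneg (hc j) (hx0 j hj)
          linarith
        · exact hc i
      · rw [Finset.sum_insert hm]
        have e : ∑ i ∈ s, (if i = m then (∑ j ∈ s, c j * a j x0) - b x0 else c i) • a i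
            = ∑ i ∈ s, c i • a i :=
          Finset.sum_congr rfl fun i hi => by rw [if_neg (show i ≠ m by rintro rfl; exact hm hi)]
        rw [e]
        ext x
        have := congrArg (fun f : V →ₗ[ℚ] ℚ => f x) hbc
        simp [LinearMap.sum_apply, mul_add, Finset.sum_add_distrib] at this ⊢
        have e2 : ∑ i ∈ s, c i * (a i x0 * a m x) = (∑ j ∈ s, c j * a j x0) * a m x := by
          rw [Finset.sum_mul]; exact Finset.sum_congr rfl fun i _ => by ring
        rw [e2] at this
        linarith

/-- Clearing denominators. -/
theorem clear_denoms' {ι : Type*} (s : Finset ι) (c : ι → ℚ) (hc : ∀ i, 0 ≤ c i) :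
    ∃ N : ℕ, 0 < N ∧ ∃ d : ι → ℕ, ∀ i ∈ s, (d i : ℚ) = N * c i := by
  classical
  refine ⟨∏ i ∈ s, (c i).den, Finset.prod_pos fun i _ => (c i).den_pos,
    fun i => (c i).num.toNat * ∏ j ∈ s.erase i, (c j).den, fun i hi => ?_⟩
  rw [← Finset.mul_prod_erase s _ hi]
  have h1 : (((c i).num.toNat : ℕ) : ℚ) = (c i).num := by
    have := Int.toNat_of_nonneg (Rat.num_nonneg.2 (hc i))
    exact_mod_cast this
  have h2 : ((c i).den : ℚ) * c i = (c i).num := Rat.den_mul_eq_num (c i)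
  push_cast
  rw [h1, ← h2]; ring

/-- Scott's axiom for sequences indexed by an arbitrary finite type. -/
theorem scott_index' [DecidableEq Ω] {σ : Finset Ω → Finset Ω} (hS : ScottAx σ)
    {ι : Type*} [Fintype ι] (A B : ι → Finset Ω)
    (hbal : ∀ ω, (∑ i, if ω ∈ A i then 1 else 0 : ℕ) = ∑ i, if ω ∈ B i then 1 else 0)
    (h : ∀ i, geStar σ (A i) (B i)) (i : ι) : geStar σ (B i) (A i) := by
  classical
  obtain ⟨n, hn⟩ : ∃ n, Fintype.card ι = n + 1 :=
    Nat.exists_eq_succ_of_ne_zero (Fintype.card_pos_iff.2 ⟨i⟩).ne'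
  let e : ι ≃ Fin (n + 1) := Fintype.equivFinOfCardEq hn
  have := hS n (fun j => A (e.symm j)) (fun j => B (e.symm j)) (by
    intro ω
    have hb := hbal ω
    rw [← Equiv.sum_comp e.symm, ← Equiv.sum_comp e.symm (fun i => if ω ∈ B i then 1 else 0)] at hb
    rw [Nat.card_eq_fintype_card, Nat.card_eq_fintype_card, Fintype.card_subtype,
      Fintype.card_subtype, Finset.card_filter, Finset.card_filter]
    exact hb) (fun j => h _) (e i)
  simpa using this

/-- The functional attached to a pair. -/
noncomputable def pairL' [DecidableEq Ω] (p : Finset Ω × Finset Ω) : (Ω → ℚ) →ₗ[ℚ] ℚ :=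
  ∑ ω ∈ p.1, LinearMap.proj ω - ∑ ω ∈ p.2, LinearMap.proj ω

theorem pairL_apply' [DecidableEq Ω] (p : Finset Ω × Finset Ω) (w : Ω → ℚ) :
    pairL' p w = ∑ ω ∈ p.1, w ω - ∑ ω ∈ p.2, w ω := by
  simp [pairL', LinearMap.sum_apply]

theorem sep_one' [Fintype Ω] [DecidableEq Ω] {σ : Finset Ω → Finset Ω} (hS : ScottAx σ)
    (p : Finset Ω × Finset Ω) (hp : geStar σ p.1 p.2) (hn : ¬ geStar σ p.2 p.1) :
    ∃ w : Ω → ℚ, (∀ q : Finset Ω × Finset Ω, geStar σ q.1 q.2 → 0 ≤ pairL' q w) ∧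
      0 < pairL' p w := by
  classical
  by_contra hcon
  push Not at hcon
  let P : Finset (Finset Ω × Finset Ω) := Finset.univ.filter fun q => geStar σ q.1 q.2
  obtain ⟨c, hc, hbc⟩ := farkas' P pairL' (-pairL' p) (by
    intro x hx
    have := hcon x (fun q hq => hx q (by simp [P, hq]))
    simpa using this)
  obtain ⟨N, hN, d, hd⟩ := clear_denoms' P c hc
  have hpP : p ∈ P := by simp [P, hp]
  let d' : P → ℕ := fun q => d q + if q.1 = p then N else 0
  have key : ∀ ω, ∑ q : P, (d' q : ℚ) * pairL' q.1 (Pi.single ω 1) = 0 := by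
    intro ω
    have h1 := congrArg (fun f : (Ω → ℚ) →ₗ[ℚ] ℚ => f (Pi.single ω 1)) hbc
    simp only [LinearMap.neg_apply, LinearMap.sum_apply, LinearMap.smul_apply, smul_eq_mul] at h1
    have h2 : ∑ q : P, (d' q : ℚ) * pairL' q.1 (Pi.single ω 1)
        = ∑ q ∈ P, ((d q : ℚ) + if q = p then (N : ℚ) else 0) * pairL' q (Pi.single ω 1) := by
      rw [← Finset.sum_coe_sort P]
      refine Finset.sum_congr rfl fun q _ => ?_
      simp only [d']; push_cast; rfl
    rw [h2]
    simp only [add_mul, Finset.sum_add_distrib, ite_mul, zero_mul, Finset.sum_ite_eq', hpP, if_true]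
    have h3 : ∑ q ∈ P, (d q : ℚ) * pairL' q (Pi.single ω 1)
        = N * ∑ q ∈ P, c q * pairL' q (Pi.single ω 1) := by
      rw [Finset.mul_sum]
      exact Finset.sum_congr rfl fun q hq => by rw [hd q hq]; ring
    rw [h3, ← h1]; ring
  have hpos : 0 < d' ⟨p, hpP⟩ := by simp [d']; omega
  refine hn (scott_index' hS (ι := Σ q : P, Fin (d' q)) (fun i => i.1.1.1) (fun i => i.1.1.2) ?_ ?_
    ⟨⟨p, hpP⟩, ⟨0, hpos⟩⟩)
  · intro ω
    have h1 := key ω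
    have hs : ∀ C : Finset Ω, ∑ x ∈ C, (Pi.single ω (1 : ℚ) : Ω → ℚ) x = if ω ∈ C then 1 else 0 := by
      intro C
      simp [Pi.single_apply]
    simp only [pairL_apply', mul_sub, Finset.sum_sub_distrib, hs] at h1
    have hk : ∀ g : P → ℕ, ∑ i : (Σ q : P, Fin (d' q)), g i.1 = ∑ q, d' q * g q := by
      intro g
      rw [Fintype.sum_sigma]
      simp
    refine (hk fun q => if ω ∈ q.1.1 then 1 else 0).trans
      (Eq.trans ?_ (hk fun q => if ω ∈ q.1.2 then 1 else 0).symm)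
    have h2 := sub_eq_zero.1 h1
    exact_mod_cast h2
  · intro i
    have := i.1.2
    simp only [P, Finset.mem_filter] at this
    exact this.2

theorem sep_all' [Fintype Ω] [DecidableEq Ω] {σ : Finset Ω → Finset Ω} (hS : ScottAx σ) :
    ∃ w : Ω → ℚ, ∀ q : Finset Ω × Finset Ω, geStar σ q.1 q.2 → 0 ≤ pairL' q w ∧
      (¬ geStar σ q.2 q.1 → 0 < pairL' q w) := by
  classical
  have h : ∀ p : Finset Ω × Finset Ω, ∃ w : Ω → ℚ,
      (∀ q : Finset Ω × Finset Ω, geStar σ q.1 q.2 → 0 ≤ pairL' q w) ∧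
      (geStar σ p.1 p.2 → ¬ geStar σ p.2 p.1 → 0 < pairL' p w) := by
    intro p
    by_cases h1 : geStar σ p.1 p.2
    · by_cases h2 : geStar σ p.2 p.1
      · exact ⟨0, by simp, fun _ h => absurd h2 h⟩
      · obtain ⟨w, hw, hw'⟩ := sep_one' hS p h1 h2
        exact ⟨w, hw, fun _ _ => hw'⟩
    · exact ⟨0, by simp, fun h => absurd h h1⟩
  choose W hW hW' using h
  refine ⟨∑ p, W p, fun q hq => ?_⟩
  rw [map_sum]
  refine ⟨Finset.sum_nonneg fun p _ => hW p q hq, fun hn => ?_⟩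
  exact Finset.sum_pos' (fun p _ => hW p q hq) ⟨q, Finset.mem_univ _, hW' q hq hn⟩

theorem forward' [Fintype Ω] [DecidableEq Ω] [Nonempty Ω] {σ : Finset Ω → Finset Ω}
    (h1 : SelA1 σ) (h2 : SelA2 σ) (h3 : SelA3 σ) (h4 : SelA4 σ) (hS : ScottAx σ) :
    ∃ w : Ω → ℝ, IsProbWeight w ∧ RegularW w ∧ RepresentsAt w (1 / 2) σ := by
  classical
  have hsing : ∀ X a, σ X ⊆ {a} → X.Nonempty → σ X = {a} := by
    intro X a h hX
    rcases Finset.subset_singleton_iff.1 h with h | h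
    · exact absurd (h1 X h) hX.ne_empty
    · exact h
  obtain ⟨v, hv⟩ := sep_all' hS
  have hstrict : ∀ a B, succS σ a B → ∑ ω ∈ B, v ω < v a := by
    intro a B hab
    have := (hv ({a}, B) (Or.inl ⟨a, rfl, hab⟩)).2 (by
      rintro (⟨b, hb, hba⟩ | ⟨b, hb, hba⟩)
      · dsimp at hb hba
        subst hb
        obtain ⟨e1, e2⟩ := hab
        obtain ⟨e3, e4⟩ := hba
        rw [Finset.union_comm, e2] at e4
        simp at e4 e1
        exact e1 e4
      · dsimp at hb hba
        have := Finset.singleton_injective hb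
        subst this
        rcases hba with hba | hba
        · exact hab.1 hba
        · exact hba hab.2)
    rw [pairL_apply'] at this
    simp at this
    exact this
  have hweak : ∀ A b, succeqS σ A b → v b ≤ ∑ ω ∈ A, v ω := by
    intro A b hab
    have := (hv (A, {b}) (Or.inr ⟨b, rfl, hab⟩)).1
    rw [pairL_apply'] at this
    simp at this
    exact this
  have hvpos : ∀ a, 0 < v a := by
    intro a
    have := hstrict a ∅ ⟨by simp, hsing _ a (by simpa using h2 {a}) (by simp)⟩
    simpa using this
  have hT : 0 < ∑ ω, v ω := Finset.sum_pos (fun i _ => hvpos i) Finset.univ_nonempty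
  let w : Ω → ℝ := fun ω => ((v ω / ∑ ω, v ω : ℚ) : ℝ)
  have hw : ∀ ω, 0 < w ω := fun ω => by
    simp only [w]
    exact_mod_cast div_pos (hvpos ω) hT
  have hmea : ∀ A, mea w A = (((∑ ω ∈ A, v ω) / ∑ ω, v ω : ℚ) : ℝ) := by
    intro A
    simp only [mea, w]
    rw [Finset.sum_div]
    push_cast
    rfl
  have hcmp : ∀ A b, mea w A < w b ↔ ∑ ω ∈ A, v ω < v b := by
    intro A b
    rw [hmea]
    simp only [w]
    rw [Rat.cast_lt, div_lt_div_iff_of_pos_right hT]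
  refine ⟨w, ⟨fun ω => (hw ω).le, ?_⟩, ?_, ?_⟩
  · have := hmea Finset.univ
    rw [div_self hT.ne'] at this
    simpa [mea] using this
  · intro X hX
    by_contra hne
    exact (mea_pos' hw (Finset.nonempty_iff_ne_empty.2 hne)).ne' hX
  · intro E
    refine ⟨fun hpos => ?_, fun h0 => ?_⟩
    · have hE : E.Nonempty := by
        rw [Finset.nonempty_iff_ne_empty]; rintro rfl; simp [mea] at hpos
      rw [least_iff' hw hE]
      refine ⟨h2 E, ?_, ?_, ?_⟩
      · rw [Finset.nonempty_iff_ne_empty]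
        exact fun h => hE.ne_empty (h1 E h)
      · intro x hx
        rw [hcmp]
        apply hstrict
        refine ⟨by simp [hx], ?_⟩
        have hxE := h2 E hx
        have h := h3 E ((E \ σ E) ∪ {x}) ⟨x, by simp [hx]⟩
        have e1 : E ∩ ((E \ σ E) ∪ {x}) = (E \ σ E) ∪ {x} := by ext z; simp; grind
        have e2 : σ E ∩ ((E \ σ E) ∪ {x}) = {x} := by ext z; simp; grind
        rw [e1, e2] at h
        exact hsing _ x h ⟨x, by simp⟩
      · intro X hXE hX hst
        obtain ⟨n, hn⟩ : ∃ n, Fintype.card X = n + 1 :=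
          Nat.exists_eq_succ_of_ne_zero (Fintype.card_pos_iff.2 hX.to_subtype).ne'
        let e : X ≃ Fin (n + 1) := Fintype.equivFinOfCardEq hn
        have h := h4 n (E \ X) (fun i => {((e.symm i : X) : Ω)}) (by
          intro i
          have hlt := hst (e.symm i) (e.symm i).2
          rw [hcmp] at hlt
          by_contra hcon
          exact absurd (hweak _ _ (Or.inr hcon)) (not_le.2 hlt))
        have e1 : (Finset.univ.biUnion fun i => ({((e.symm i : X) : Ω)} : Finset Ω)) = X := by
          ext z
          simp only [Finset.mem_biUnion, Finset.mem_univ, true_and, Finset.mem_singleton]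
          constructor
          · rintro ⟨i, rfl⟩; exact (e.symm i).2
          · intro hz; exact ⟨e ⟨z, hz⟩, by simp⟩
        rw [e1, Finset.sdiff_union_of_subset hXE] at h
        exact h
    · have : E = ∅ := by
        by_contra hne
        exact (mea_pos' hw (Finset.nonempty_iff_ne_empty.2 hne)).ne' h0
      subst this
      exact Finset.subset_empty.1 (h2 ∅)

theorem backward' [Fintype Ω] [DecidableEq Ω] {σ : Finset Ω → Finset Ω}
    {w : Ω → ℝ} (hP : IsProbWeight w) (hR : RegularW w) (hrep : RepresentsAt w (1 / 2) σ) :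
    SelA1 σ ∧ SelA2 σ ∧ SelA3 σ ∧ SelA4 σ ∧ ScottAx σ := by
  have hw : ∀ ω, 0 < w ω := by
    intro ω
    refine lt_of_le_of_ne (hP.1 ω) fun h => ?_
    have := hR {ω} (by rw [mea_single', ← h])
    simp at this
  have hemp : σ ∅ = ∅ := (hrep ∅).2 (by simp [mea])
  have hl : ∀ E : Finset Ω, E.Nonempty → _ := fun E hE =>
    (least_iff' hw hE).1 ((hrep E).1 (mea_pos' hw hE))
  have a1 : SelA1 σ := by
    intro X hX
    by_contra hne
    exact (hl X (Finset.nonempty_iff_ne_empty.2 hne)).2.1.ne_empty hX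
  have a2 : SelA2 σ := by
    intro X
    rcases X.eq_empty_or_nonempty with rfl | hX
    · rw [hemp]
    · exact (hl X hX).1
  have hst : ∀ E, ∀ x ∈ σ E, mea w (E \ σ E) < w x := by
    intro E x hx
    exact (hl E ⟨x, a2 E hx⟩).2.2.1 x hx
  have hsucc : ∀ a B, a ∉ B → (σ (B ∪ {a}) = {a} ↔ mea w B < w a) := by
    intro a B haB
    have e : (B ∪ {a}) \ {a} = B := by ext z; simp; grind
    constructor
    · intro h
      have := hst (B ∪ {a}) a (by rw [h]; simp)
      rwa [h, e] at this
    · intro h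
      have hh := hl (B ∪ {a}) ⟨a, by simp⟩
      have := hh.2.2.2 {a} (by simp) (by simp) (by
        intro x hx
        rw [Finset.mem_singleton.1 hx, e]; exact h)
      rcases Finset.subset_singleton_iff.1 this with h' | h'
      · exact absurd h' hh.2.1.ne_empty
      · exact h'
  refine ⟨a1, a2, ?_, ?_, ?_⟩
  · intro A B hne
    obtain ⟨y, hy⟩ := id hne
    have hyA := a2 A (Finset.mem_inter.1 hy).1
    refine (hl (A ∩ B) ⟨y, by simp [hyA, (Finset.mem_inter.1 hy).2]⟩).2.2.2 _
      (Finset.inter_subset_inter_right (a2 A)) hne ?_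
    intro x hx
    refine lt_of_le_of_lt (mea_mono' hw ?_) (hst A x (Finset.mem_inter.1 hx).1)
    intro z; simp; grind
  · intro n A X hX
    rcases (Finset.univ.biUnion X).eq_empty_or_nonempty with h | h
    · have h0 : X 0 = ∅ := by
        rw [← Finset.subset_empty, ← h]
        exact Finset.subset_biUnion_of_mem X (Finset.mem_univ 0)
      have := hX 0
      rw [h0] at this
      rw [h, this]
    · refine (hl _ (h.mono Finset.subset_union_right)).2.2.2 _ Finset.subset_union_right h ?_
      intro x hx
      obtain ⟨i, _, hi⟩ := Finset.mem_biUnion.1 hx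
      have := hst (A ∪ X i) x (by rw [hX i]; exact hi)
      rw [hX i] at this
      refine lt_of_le_of_lt (mea_mono' hw ?_) this
      have hsub := Finset.subset_biUnion_of_mem X (Finset.mem_univ i)
      intro z; simp only [Finset.mem_sdiff, Finset.mem_union]
      rintro ⟨h1 | h1, h2⟩
      · exact ⟨Or.inl h1, fun h3 => h2 (hsub h3)⟩
      · exact absurd h1 h2
  · intro n A B hbal hge
    have hle : ∀ i, mea w (B i) ≤ mea w (A i) := by
      intro i
      rcases hge i with ⟨a, ha, h1, h2⟩ | ⟨b, hb, h⟩
      · rw [ha, mea_single']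
        exact ((hsucc a _ h1).1 h2).le
      · rw [hb, mea_single']
        by_cases hbA : b ∈ A i
        · rw [← mea_single' w b]
          exact mea_mono' hw (by simpa using hbA)
        · by_contra hcon
          push Not at hcon
          rcases h with h | h
          · exact hbA h
          · exact h ((hsucc b _ hbA).2 hcon)
    have hbal' : ∀ ω, (∑ i, if ω ∈ A i then 1 else 0 : ℕ) = ∑ i, if ω ∈ B i then 1 else 0 := by
      intro ω
      have := hbal ω
      rwa [Nat.card_eq_fintype_card, Nat.card_eq_fintype_card, Fintype.card_subtype,
        Fintype.card_subtype, Finset.card_filter, Finset.card_filter] at this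
    have hsum : ∑ i, mea w (A i) = ∑ i, mea w (B i) := by
      have hx : ∀ C : Fin (n + 1) → Finset Ω, ∑ i, mea w (C i)
          = ∑ ω, ((∑ i, if ω ∈ C i then 1 else 0 : ℕ) : ℝ) * w ω := by
        intro C
        push_cast
        simp only [Finset.sum_mul]
        rw [Finset.sum_comm]
        refine Finset.sum_congr rfl fun i _ => ?_
        simp [mea]
      rw [hx, hx]
      simp only [hbal']
    have hcard : ∑ i, (A i).card = ∑ i, (B i).card := by
      have hx : ∀ C : Fin (n + 1) → Finset Ω, ∑ i, (C i).card
          = ∑ ω, (∑ i, if ω ∈ C i then 1 else 0 : ℕ) := by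
        intro C
        rw [Finset.sum_comm]
        refine Finset.sum_congr rfl fun i _ => ?_
        simp
      rw [hx, hx]
      simp only [hbal']
    have heq : ∀ i, mea w (B i) = mea w (A i) := fun i =>
      (Finset.sum_eq_sum_iff_of_le fun i _ => hle i).1 hsum.symm i (Finset.mem_univ i)
    have hB : ∀ i, ∃ b, B i = {b} := by
      intro i
      rcases hge i with ⟨a, ha, h1, h2⟩ | ⟨b, hb, h⟩
      · have := (hsucc a _ h1).1 h2
        have h' := heq i
        rw [ha, mea_single'] at h'
        linarith
      · exact ⟨b, hb⟩
    have hAne : ∀ i, 1 ≤ (A i).card := by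
      intro i
      rw [Nat.one_le_iff_ne_zero, Ne, Finset.card_eq_zero]
      intro h0
      obtain ⟨b, hb⟩ := hB i
      have h' := heq i
      rw [h0, hb, mea_single'] at h'
      have := hw b
      simp [mea] at h'
      linarith
    have hA : ∀ i, ∃ a, A i = {a} := by
      intro i
      rw [← Finset.card_eq_one]
      have hBc : ∀ i, (B i).card = 1 := fun i => Finset.card_eq_one.2 (hB i)
      have := (Finset.sum_eq_sum_iff_of_le (s := Finset.univ)
        (f := fun i => (B i).card) (g := fun i => (A i).card)
        (fun i _ => by rw [hBc i]; exact hAne i)).1 hcard.symm i (Finset.mem_univ i)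
      rw [← this, hBc i]
    intro i
    obtain ⟨a, ha⟩ := hA i
    obtain ⟨b, hb⟩ := hB i
    refine Or.inr ⟨a, ha, ?_⟩
    by_cases hab : a ∈ B i
    · exact Or.inl hab
    · right
      intro h
      have h1 := (hsucc a _ hab).1 h
      have h2 := heq i
      rw [ha, mea_single'] at h2
      linarith

/-- Representation theorem for selection structures, Theorem `REPSEL`:
a selection function satisfying (S1), (S2), (S3), (S4ₙ) and (Scott) is represented by some
regular probability measure for threshold 1/2; conversely, any selection function represented
by a regular probability measure for threshold 1/2 satisfies those axioms. -/
theorem stmt10 [Fintype Ω] [DecidableEq Ω] [Nonempty Ω] (σ : Finset Ω → Finset Ω) :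
    ((SelA1 σ ∧ SelA2 σ ∧ SelA3 σ ∧ SelA4 σ ∧ ScottAx σ) →
        ∃ w : Ω → ℝ, IsProbWeight w ∧ RegularW w ∧ RepresentsAt w (1 / 2) σ) ∧
    (∀ w : Ω → ℝ, IsProbWeight w → RegularW w → RepresentsAt w (1 / 2) σ →
        (SelA1 σ ∧ SelA2 σ ∧ SelA3 σ ∧ SelA4 σ ∧ ScottAx σ)) := by
  exact ⟨fun h => forward' h.1 h.2.1 h.2.2.1 h.2.2.2.1 h.2.2.2.2,
    fun _ hP hR hrep => backward' hP hR hrep⟩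
end

section
/- Let Ω be a finite nonempty set, μ a regular probability measure on Ω, and σ a selection function on Ω that μ represents for threshold 1/2. Then the (Scott) axiom holds for σ: whenever (A_i)_{i≤n} ≡₀ (B_i)_{i≤n} and A_i ⪰*_σ B_i for all i ≤ n, then A_i ⪯*_σ B_i for all i ≤ n. -/
open Finset

variable {Ω : Type*}

theorem wpos_aux (w : Ω → ℝ) (h0 : ∀ ω, 0 ≤ w ω) (hreg : RegularW w) (a : Ω) : 0 < w a := by
  rcases (h0 a).lt_or_eq with h | h
  · exact h
  · have := hreg {a} (by simp [mea, ← h])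
    simp at this

theorem sel_iff_aux [DecidableEq Ω] (w : Ω → ℝ) (hp : ∀ ω, 0 < w ω)
    (σ : Finset Ω → Finset Ω) (hrep : RepresentsAt w (1 / 2) σ) (X : Finset Ω) (a : Ω)
    (ha : a ∉ X) : σ (X ∪ {a}) = {a} ↔ mea w X < w a := by
  have hX : 0 ≤ mea w X := Finset.sum_nonneg fun i _ => (hp i).le
  have hE : mea w (X ∪ {a}) = mea w X + w a := by
    unfold mea
    rw [Finset.sum_union (by simpa using ha)]
    simp
  have hEpos : 0 < mea w (X ∪ {a}) := by rw [hE]; linarith [hp a]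
  have hl := (hrep (X ∪ {a})).1 hEpos
  have hs : mea w {a} = w a := by simp [mea]
  constructor
  · intro h
    rw [h] at hl
    have h1 : ({a} : Finset Ω) ∩ (X ∪ {a}) = {a} := by ext; simp; tauto
    have h2 : (X ∪ {a}) ∩ ({a} : Finset Ω) = {a} := by ext; simp
    have h3 : condMea w (X ∪ {a}) (X ∪ {a}) = 1 := by
      unfold condMea
      rw [Finset.inter_self, div_self hEpos.ne']
    have := hl.1.2 (X ∪ {a}) (by rw [h1]; simp) (by rw [h3]; norm_num)
    rw [h1, h3, div_one] at this
    unfold condMea at this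
    rw [h2, hs, lt_div_iff₀ hEpos, hE] at this
    linarith
  · intro h
    have hst : StableFor (condMea w (X ∪ {a})) (1 / 2) {a} := by
      refine ⟨by simp, fun F hF hpos => ?_⟩
      have haF : a ∈ F := by
        obtain ⟨x, hx⟩ := hF
        simp at hx
        exact hx.1 ▸ hx.2
      have h1 : (X ∪ {a}) ∩ (({a} : Finset Ω) ∩ F) = {a} := by
        ext x; simp; grind
      rw [lt_div_iff₀ hpos]
      unfold condMea
      rw [h1, hs, ← mul_div_assoc]
      apply div_lt_div_of_pos_right _ hEpos
      have : mea w ((X ∪ {a}) ∩ F) ≤ mea w (X ∪ {a}) :=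
        Finset.sum_le_sum_of_subset_of_nonneg Finset.inter_subset_left
          fun i _ _ => (hp i).le
      linarith
    exact (Finset.subset_singleton_iff.1 (hl.2 _ hst)).resolve_left hl.1.1.ne_empty

theorem balanced_sum_aux [Fintype Ω] [DecidableEq Ω] {n : ℕ} (A B : Fin n → Finset Ω)
    (h : BalancedSeq A B) (f : Ω → ℝ) : ∑ i, mea f (A i) = ∑ i, mea f (B i) := by
  have key : ∀ C : Fin n → Finset Ω,
      ∑ i, mea f (C i) = ∑ ω, (Nat.card {i // ω ∈ C i} : ℝ) * f ω := by
    intro C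
    have : ∀ i, mea f (C i) = ∑ ω, if ω ∈ C i then f ω else 0 := by
      intro i
      simp [mea]
    simp_rw [this]
    rw [Finset.sum_comm]
    refine Finset.sum_congr rfl fun ω _ => ?_
    rw [← Finset.sum_filter, Finset.sum_const, nsmul_eq_mul, Nat.card_eq_fintype_card,
      Fintype.card_subtype]
  rw [key, key]
  exact Finset.sum_congr rfl fun ω _ => by rw [h ω]

theorem geStar_le_aux [DecidableEq Ω] (w : Ω → ℝ) (hp : ∀ ω, 0 < w ω)
    (σ : Finset Ω → Finset Ω) (hrep : RepresentsAt w (1 / 2) σ) (A B : Finset Ω)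
    (h : geStar σ A B) : mea w B < mea w A ∨ (mea w B ≤ mea w A ∧ ∃ b, B = {b}) := by
  rcases h with ⟨a, rfl, h1, h2⟩ | ⟨b, rfl, h⟩
  · left
    have := (sel_iff_aux w hp σ hrep B a h1).1 h2
    simpa [mea] using this
  · right
    refine ⟨?_, b, rfl⟩
    have hs : mea w {b} = w b := by simp [mea]
    by_cases hb : b ∈ A
    · exact Finset.sum_le_sum_of_subset_of_nonneg (by simpa using hb) fun i _ _ => (hp i).le
    · have h := h.resolve_left hb
      rw [Ne, sel_iff_aux w hp σ hrep A b hb] at h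
      rw [hs]
      exact not_lt.1 h

/-- soundness of the (Scott) axiom: if a regular probability measure
represents `σ` for threshold 1/2, then the (Scott) axiom holds for `σ`. -/
theorem stmt11 [Fintype Ω] [DecidableEq Ω] [Nonempty Ω]
    (w : Ω → ℝ) (hw : IsProbWeight w) (hreg : RegularW w)
    (σ : Finset Ω → Finset Ω) (hrep : RepresentsAt w (1 / 2) σ) :
    ScottAx σ := by
  have hp := wpos_aux w hw.1 hreg
  intro n A B hbal hge
  have hle := fun i => geStar_le_aux w hp σ hrep _ _ (hge i)
  have hle' : ∀ i ∈ (Finset.univ : Finset (Fin (n + 1))), mea w (B i) ≤ mea w (A i) := by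
    intro i _
    rcases hle i with h | h
    · exact h.le
    · exact h.1
  have heq : ∀ i, mea w (B i) = mea w (A i) := fun i =>
    (Finset.sum_eq_sum_iff_of_le hle').1 (balanced_sum_aux A B hbal w).symm i (Finset.mem_univ i)
  have hB : ∀ i, ∃ b, B i = {b} := by
    intro i
    rcases hle i with h | h
    · exact absurd (heq i) h.ne
    · exact h.2
  have hc : ∀ i ∈ (Finset.univ : Finset (Fin (n + 1))),
      mea (fun _ => (1 : ℝ)) (B i) ≤ mea (fun _ => (1 : ℝ)) (A i) := by
    intro i _
    obtain ⟨b, hb⟩ := hB i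
    have hne : (A i).Nonempty := by
      rw [Finset.nonempty_iff_ne_empty]
      intro h
      have := heq i
      rw [h, hb] at this
      simp [mea] at this
      exact (hp b).ne' this
    have := hne.card_pos
    simp only [mea, hb, Finset.sum_const, Finset.card_singleton, nsmul_eq_mul, mul_one]
    exact_mod_cast this
  intro i
  have hci := (Finset.sum_eq_sum_iff_of_le hc).1
    (balanced_sum_aux A B hbal _).symm i (Finset.mem_univ i)
  obtain ⟨b, hb⟩ := hB i
  have hA : (A i).card = 1 := by
    simp only [mea, hb, Finset.sum_const, Finset.card_singleton, nsmul_eq_mul, mul_one] at hci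
    exact_mod_cast hci.symm
  obtain ⟨a, ha⟩ := Finset.card_eq_one.1 hA
  have hi := heq i
  rw [ha, hb] at hi ⊢
  right
  refine ⟨a, rfl, ?_⟩
  by_cases hab : a ∈ ({b} : Finset Ω)
  · exact Or.inl hab
  · right
    rw [Ne, sel_iff_aux w hp σ hrep _ a hab, hi]
    simp [mea]
end

section
/- Let Ω be a finite nonempty set, t ∈ [1/2, 1), μ a probability measure on Ω, and σ a selection function on Ω that μ represents for threshold t. Let X_1, …, X_n ⊆ Ω (n ≥ 1) with μ(X_i) > 0 for each i, and suppose X_i\X_j ⊆ σ(X_i) for all i ≠ j. Then the set ⋃_{i≤n} σ(X_i) is (μ_{⋃_{i≤n}X_i}, t)-stable, and consequently σ(⋃_{i≤n} X_i) ⊆ ⋃_{i≤n} σ(X_i) (the weak Or rule). -/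
open Finset

variable {Ω : Type*}

theorem mea_mono13 (w : Ω → ℝ) (h : ∀ ω, 0 ≤ w ω) {A B : Finset Ω} (hAB : A ⊆ B) :
    mea w A ≤ mea w B :=
  Finset.sum_le_sum_of_subset_of_nonneg hAB fun x _ _ => h x

theorem mea_sdiff13 [DecidableEq Ω] (w : Ω → ℝ) {A B : Finset Ω} (hAB : A ⊆ B) :
    mea w (B \ A) + mea w A = mea w B :=
  Finset.sum_sdiff hAB

theorem cond_div13 [DecidableEq Ω] (w : Ω → ℝ) (A B C : Finset Ω) (hA : 0 < mea w A) :
    condMea w A B / condMea w A C = mea w (A ∩ B) / mea w (A ∩ C) := by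
  unfold condMea
  exact div_div_div_cancel_right₀ hA.ne' _ _

/-- Observation `weakOr`, the weak Or rule: if `X_i \ X_j ⊆ σ(X_i)` for
all `i ≠ j`, then `⋃ᵢ σ(X_i)` is `(μ_{⋃ᵢ X_i}, t)`-stable and hence
`σ(⋃ᵢ X_i) ⊆ ⋃ᵢ σ(X_i)`. -/
theorem stmt13 [Fintype Ω] [DecidableEq Ω] [Nonempty Ω]
    (t : ℝ) (ht0 : 1 / 2 ≤ t) (ht1 : t < 1)
    (w : Ω → ℝ) (hw : IsProbWeight w)
    (σ : Finset Ω → Finset Ω) (hrep : RepresentsAt w t σ)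
    (n : ℕ) (X : Fin (n + 1) → Finset Ω)
    (hpos : ∀ i, 0 < mea w (X i))
    (hsub : ∀ i j, i ≠ j → X i \ X j ⊆ σ (X i)) :
    StableFor (condMea w (univ.biUnion X)) t (univ.biUnion fun i => σ (X i)) ∧
      σ (univ.biUnion X) ⊆ univ.biUnion fun i => σ (X i) := by
  have h0 := hw.1
  have hU : 0 < mea w (univ.biUnion X) :=
    lt_of_lt_of_le (hpos 0) (mea_mono13 w h0 (Finset.subset_biUnion_of_mem X (mem_univ 0)))
  have key : StableFor (condMea w (univ.biUnion X)) t (univ.biUnion fun i => σ (X i)) := by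
    refine ⟨?_, ?_⟩
    · obtain ⟨x, hx⟩ := ((hrep (X 0)).1 (hpos 0)).1.1
      exact ⟨x, mem_biUnion.2 ⟨0, mem_univ _, hx⟩⟩
    · rintro E ⟨x, hx⟩ hE
      obtain ⟨hxS, hxE⟩ := mem_inter.1 hx
      obtain ⟨i, -, hxi⟩ := mem_biUnion.1 hxS
      have hst := ((hrep (X i)).1 (hpos i)).1.2 E ⟨x, mem_inter.2 ⟨hxi, hxE⟩⟩
      rw [cond_div13 w _ _ _ (hpos i)] at hst
      rw [cond_div13 w _ _ _ hU]
      have hQ : 0 < mea w (univ.biUnion X ∩ E) := by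
        unfold condMea at hE
        exact (div_pos_iff_of_pos_right hU).1 hE
      rw [lt_div_iff₀ hQ]
      set S := univ.biUnion fun i => σ (X i) with hS
      have e1 := mea_sdiff13 w (A := univ.biUnion X ∩ (S ∩ E)) (B := univ.biUnion X ∩ E)
        (inter_subset_inter_left inter_subset_right)
      have e2 := mea_sdiff13 w (A := X i ∩ (σ (X i) ∩ E)) (B := X i ∩ E)
        (inter_subset_inter_left inter_subset_right)
      have e3 : mea w ((univ.biUnion X ∩ E) \ (univ.biUnion X ∩ (S ∩ E))) ≤
          mea w ((X i ∩ E) \ (X i ∩ (σ (X i) ∩ E))) := by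
        apply mea_mono13 w h0
        intro y hy
        simp only [mem_sdiff, mem_inter, not_and] at hy ⊢
        obtain ⟨⟨hyU, hyE⟩, hyn⟩ := hy
        have hyS : ∀ k, y ∉ σ (X k) := fun k hk =>
          hyn hyU (mem_biUnion.2 ⟨k, mem_univ _, hk⟩) hyE
        obtain ⟨j, -, hyj⟩ := mem_biUnion.1 hyU
        refine ⟨⟨?_, hyE⟩, fun _ h => absurd h (hyS i)⟩
        by_contra hni
        have hji : j ≠ i := by
          rintro rfl
          exact hni hyj
        exact hyS j (hsub j i hji (mem_sdiff.2 ⟨hyj, hni⟩))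
      have e4 : mea w (X i ∩ (σ (X i) ∩ E)) ≤ mea w (univ.biUnion X ∩ (S ∩ E)) := by
        apply mea_mono13 w h0
        exact inter_subset_inter (Finset.subset_biUnion_of_mem X (mem_univ i))
          (inter_subset_inter_right
            (Finset.subset_biUnion_of_mem (fun i => σ (X i)) (mem_univ i)))
      have e5 : 0 ≤ mea w (X i ∩ (σ (X i) ∩ E)) := Finset.sum_nonneg fun x _ => h0 x
      rcases (show 0 ≤ mea w (X i ∩ E) from Finset.sum_nonneg fun x _ => h0 x).eq_or_lt with
        hb | hb
      · nlinarith
      · have hs := hst (div_pos hb (hpos i))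
        rw [lt_div_iff₀ hb] at hs
        nlinarith
  exact ⟨key, ((hrep _).1 hU).2 _ key⟩
end

section
/- Let Ω be a finite nonempty set and σ a selection function on Ω satisfying the property (wO): for every n ≥ 1 and all X_1, …, X_n ⊆ Ω, if X_i\X_j ⊆ σ(X_i) for all i ≠ j, then σ(⋃_{i≤n} X_i) ⊆ ⋃_{i≤n} σ(X_i). Then σ satisfies (S4ₙ) for every n ≥ 1: if σ(A∪X_i) = X_i for all i ≤ n, then σ(A∪⋃_{i≤n}X_i) ⊆ ⋃_{i≤n}X_i. -/
open Finset

variable {Ω : Type*}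

/-- Observation `weakOr2`: the property (wO) entails the axiom (S4ₙ)
for every `n`. -/
theorem stmt14 [Fintype Ω] [DecidableEq Ω] [Nonempty Ω]
    (σ : Finset Ω → Finset Ω)
    (hwO : ∀ n : ℕ, ∀ X : Fin (n + 1) → Finset Ω,
      (∀ i j, i ≠ j → X i \ X j ⊆ σ (X i)) →
      σ (univ.biUnion X) ⊆ univ.biUnion fun i => σ (X i)) :
    SelA4 σ := by
  intro n A X h
  have key := hwO n (fun i => A ∪ X i) (by
    intro i j _ x hx
    simp only [h]
    simp only [mem_sdiff, mem_union, not_or] at hx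
    exact hx.1.resolve_left hx.2.1)
  have e : (univ.biUnion fun i => A ∪ X i) = A ∪ univ.biUnion X := by
    ext x
    simp only [mem_biUnion, mem_univ, true_and, mem_union]
    constructor
    · rintro ⟨i, hA | hX⟩
      · exact Or.inl hA
      · exact Or.inr ⟨i, hX⟩
    · rintro (hA | ⟨i, hX⟩)
      · exact ⟨0, Or.inl hA⟩
      · exact ⟨i, Or.inr hX⟩
  simp only [h] at key
  rw [e] at key
  exact key
end
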